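/- Let X be a class of primitive finite soluble groups (closed under isomorphism) which is primitive quotient closed, dual closed and subtensor closed. Let F be the class of all finite soluble groups all of whose chief factors are X-central. Then F is a saturated formation and F = pdef(X), the class of all finite soluble groups every primitive quotient of which lies in X. -/

import Mathlib

/-!
Fix `X`, write `F` for the class of groups whose chief factors are all `X`-central, and let `q`
stand for a prime.

`F ≤ pdef X`: if `P` is a primitive quotient of `G ∈ F`, its socle is (the image of) a chief
factor of `G`, so the split extension of that chief factor lies in `X`. The socle of a finite
soluble primitive group has a complement (`primitive_complement`), so `P` is isomorphic to this
split extension (`IsChiefFactorMap.isSplitModuleExtension`, `IsSplitData.nonempty_mulEquiv`).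

`pdef X ≤ F`: induct on `|G|`. Every chief factor which survives in a proper quotient of `G` is
`X`-central, so only the case of a chief factor `A/1` with `A` contained in every nontrivial
normal subgroup is left. If `A` has a complement then `G` is primitive, hence in `X`. Otherwise
`A` has no proper supplement, and `A` is a `q`-group. The `X`-central irreducible `𝔽_q G`-modules
form a family whose tensor products have all their composition factors in the family: this is
subtensor closure (`IsXRep.tensor`). Let `D` be the common kernel of the family. It centralizes
all `q`-chief factors above `A`, and a coprime action and Frattini argument shows that `D` is a
`q`-group (`isPGroup_of_centralizes_chiefFactors`). Therefore `D` centralizes `A`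
(`pgroup_centralizes_monolith`). By a Burnside–Steinberg argument, a nonempty tensor-closed family
contains every irreducible module on which its common kernel acts trivially
(`mem_of_commonKernel_le`), so `A` is in the family, i.e. it is `X`-central
(`isXCentral_of_nonsupplement`).

The formation and saturation properties are then read off from whichever description is
convenient: quotient closure is obvious for `pdef X`; a chief factor of `G/(N ∩ M)` corresponds to
a chief factor of `G/N` or of `G/M`, which gives the subdirect closure of `F`; and a normal
subgroup inside the Frattini subgroup is killed by every primitive quotient
(`le_ker_of_frattini`), so `pdef X` is saturated.
-/

open Function TensorProduct

/-- `A` is a minimal normal subgroup of `G`. -/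
def IsMinimalNormalSubgroup (G : Type) [Group G] (A : Subgroup G) : Prop :=
  A.Normal ∧ A ≠ ⊥ ∧ ∀ N : Subgroup G, N.Normal → N ≤ A → N = ⊥ ∨ N = A

/-- `A/B` is a chief factor of `G`: `B ≤ A` are normal subgroups of `G` and `A/B` is a minimal
normal subgroup of `G/B`. -/
def IsChiefFactor (G : Type) [Group G] (A B : Subgroup G) : Prop :=
  A.Normal ∧ B.Normal ∧ B < A ∧
    ∀ N : Subgroup G, N.Normal → B ≤ N → N ≤ A → N = B ∨ N = A

/-- A primitive group: a group with a minimal normal subgroup equal to its own centralizer. -/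
def IsPrimitiveGroup (G : Type) [Group G] : Prop :=
  ∃ K : Subgroup G, IsMinimalNormalSubgroup G K ∧ Subgroup.centralizer (K : Set G) = K

/-- A bundled group. -/
structure GrpB where
  carrier : Type
  [str : Group carrier]

attribute [instance] GrpB.str

instance : CoeSort GrpB Type := ⟨GrpB.carrier⟩

/-- A bundled representation of `G` over `ZMod p`. -/
structure RepB (p : ℕ) (G : Type) [Group G] where
  V : Type
  [instAdd : AddCommGroup V]
  [instMod : Module (ZMod p) V]
  ρ : Representation (ZMod p) G V

attribute [instance] RepB.instAdd RepB.instMod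

/-- A representation is irreducible if the module is nonzero and has no nontrivial proper
invariant submodule. -/
def IsIrreducibleRep {p : ℕ} {G V : Type} [Group G]
    [AddCommGroup V] [Module (ZMod p) V] (ρ : Representation (ZMod p) G V) : Prop :=
  Nontrivial V ∧
    ∀ S : Submodule (ZMod p) V, (∀ (g : G), ∀ v ∈ S, ρ g v ∈ S) → S = ⊥ ∨ S = ⊤

/-- `φ : A → V` realizes the representation `ρ` on `V` as the chief factor module `[A/B]`. -/
def IsChiefFactorMap (p : ℕ) {G : Type} [Group G] (A B : Subgroup G) {V : Type}
    [AddCommGroup V] [Module (ZMod p) V] (ρ : Representation (ZMod p) G V) (φ : A → V) : Prop :=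
  IsChiefFactor G A B ∧
    (∀ a b : A, φ (a * b) = φ a + φ b) ∧
    Function.Surjective φ ∧
    (∀ a : A, φ a = 0 ↔ (a : G) ∈ B) ∧
    (∀ (g : G) (a a' : A), (a' : G) = g * (a : G) * g⁻¹ → φ a' = ρ g (φ a))

/-- `ρV` is (isomorphic to) a composition factor of the representation `ρX`. -/
def IsCompositionFactorOf {p : ℕ} {G V X : Type} [Group G]
    [AddCommGroup V] [Module (ZMod p) V] [AddCommGroup X] [Module (ZMod p) X]
    (ρV : Representation (ZMod p) G V) (ρX : Representation (ZMod p) G X) : Prop :=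
  IsIrreducibleRep ρV ∧
    ∃ T S : Submodule (ZMod p) X,
      (∀ (g : G), ∀ x ∈ T, ρX g x ∈ T) ∧
      (∀ (g : G), ∀ x ∈ S, ρX g x ∈ S) ∧
      S ≤ T ∧
      ∃ ψ : T →ₗ[ZMod p] V, Function.Surjective ψ ∧
        (∀ t : T, ψ t = 0 ↔ (t : X) ∈ S) ∧
        (∀ (g : G) (t t' : T), (t' : X) = ρX g (t : X) → ψ t' = ρV g (ψ t))

/-- `H` is the split extension of the module `V` (with `G` acting via `ρ`) by `G/C_G(V)`:
`H = V ⋊ (G / C_G(V))`, encoded by an embedding `j` of the additive group of `V` as a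
complemented normal subgroup and a homomorphism `π : G → H` with kernel the centralizer of `V`
inducing the action `ρ` by conjugation. -/
def IsSplitModuleExtension {p : ℕ} {G V : Type} [Group G]
    [AddCommGroup V] [Module (ZMod p) V] (ρ : Representation (ZMod p) G V)
    (H : Type) [Group H] : Prop :=
  ∃ (j : V → H) (π : G →* H),
    (∀ v w : V, j (v + w) = j v * j w) ∧
    (∀ v : V, j v = 1 ↔ v = 0) ∧
    (∀ (g : G) (v : V), j (ρ g v) = π g * j v * (π g)⁻¹) ∧
    (∀ g : G, π g = 1 ↔ ∀ v : V, ρ g v = v) ∧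
    (∀ h : H, ∃ (v : V) (g : G), h = j v * π g) ∧
    (∀ (v : V) (g : G), j v * π g = 1 → j v = 1 ∧ π g = 1)

/-- The chief factor `A/B` of `G` is `X`-central: the split extension of `[A/B]` by
`G/C_G(A/B)` belongs to `X`. -/
def IsXCentral (X : GrpB → Prop) (G : Type) [Group G] (A B : Subgroup G) : Prop :=
  IsChiefFactor G A B ∧
    ∃ p : ℕ, p.Prime ∧
      ∃ (M : RepB p G) (φ : A → M.V), IsChiefFactorMap p A B M.ρ φ ∧
        ∃ H : GrpB, X H ∧ IsSplitModuleExtension M.ρ H.carrier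

/-- `X` is closed under isomorphisms. -/
def IsoClosed (X : GrpB → Prop) : Prop :=
  ∀ P Q : GrpB, X P → Nonempty (P.carrier ≃* Q.carrier) → X Q

/-- `X` consists of primitive finite soluble groups. -/
def IsPrimitiveClass (X : GrpB → Prop) : Prop :=
  ∀ P : GrpB, X P → Finite P.carrier ∧ IsSolvable P.carrier ∧ IsPrimitiveGroup P.carrier

/-- `X` is chief factor closed: for `P ∈ X` and every chief factor `A/B` of `P`, the split
extension of `A/B` by `P/C_P(A/B)` is in `X`. -/
def ChiefFactorClosed (X : GrpB → Prop) : Prop :=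
  ∀ P : GrpB, X P → ∀ A B : Subgroup P.carrier, IsChiefFactor P.carrier A B →
    IsXCentral X P.carrier A B

/-- `X` is primitive quotient closed: every primitive quotient of a member of `X` is in `X`. -/
def PrimitiveQuotientClosed (X : GrpB → Prop) : Prop :=
  ∀ P : GrpB, X P → ∀ (H : GrpB) (π : P.carrier →* H.carrier), Function.Surjective π →
    IsPrimitiveGroup H.carrier → X H

/-- `H` is the split extension of the dual module `Hom(A, 𝔽_p)` of the elementary abelian
`p`-group `A = Soc P` by `P/A`: encoded by a normal complemented subgroup `M` of `H`, a
homomorphism `π : P → H` with kernel `A`, and a perfect equivariant pairing `β` exhibiting `M`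
as the dual of `A`. -/
def IsDualSplitExtension (p : ℕ) {P : Type} [Group P] (A : Subgroup P)
    (H : Type) [Group H] : Prop :=
  ∃ (M : Subgroup H) (π : P →* H) (β : M → A → ZMod p),
    M.Normal ∧
    (∀ x : P, π x = 1 ↔ x ∈ A) ∧
    (∀ (m m' : M) (a : A), β (m * m') a = β m a + β m' a) ∧
    (∀ (m : M) (a a' : A), β m (a * a') = β m a + β m a') ∧
    (∀ m : M, (∀ a : A, β m a = 0) → m = 1) ∧
    (∀ f : A → ZMod p, (∀ a b : A, f (a * b) = f a + f b) →
      ∃ m : M, ∀ a : A, β m a = f a) ∧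
    (∀ (x : P) (m m' : M) (a a' : A),
      (m' : H) = π x * (m : H) * (π x)⁻¹ → (a' : P) = x * (a : P) * x⁻¹ → β m' a' = β m a) ∧
    (∀ h : H, ∃ (m : M) (x : P), h = (m : H) * π x) ∧
    (∀ (m : M) (x : P), (m : H) * π x = 1 → (m : H) = 1 ∧ π x = 1)

/-- `X` is dual closed: for every `P ∈ X` with socle `A`, the split extension of the dual
module `Hom(A, 𝔽_p)` by `P/A` is in `X`. -/
def DualClosed (X : GrpB → Prop) : Prop :=
  ∀ P : GrpB, X P → ∀ (p : ℕ), p.Prime →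
    ∀ A : Subgroup P.carrier, IsMinimalNormalSubgroup P.carrier A →
      (∃ n : ℕ, Nat.card A = p ^ n) →
      ∀ H : GrpB, IsDualSplitExtension p A H.carrier → X H

/-- `X` is subtensor closed: for `P, Q ∈ X` with socles `A, B` (elementary abelian for the same
prime `p`), `L` a subdirect sum of `P/A` and `Q/B` (encoded as a subgroup of `P × Q` containing
`A × B` and projecting onto both factors), and `C` a composition factor of the `𝔽_p L`-module
`A ⊗ B`, every primitive split extension of `C` by `L/C_L(C)` is in `X`. -/
def SubtensorClosed (X : GrpB → Prop) : Prop :=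
  ∀ P Q : GrpB, X P → X Q → ∀ (p : ℕ), p.Prime →
    ∀ (A : Subgroup P.carrier) (B : Subgroup Q.carrier),
      IsMinimalNormalSubgroup P.carrier A → IsMinimalNormalSubgroup Q.carrier B →
      ∀ (MA : RepB p P.carrier) (φA : A → MA.V), IsChiefFactorMap p A ⊥ MA.ρ φA →
      ∀ (MB : RepB p Q.carrier) (φB : B → MB.V), IsChiefFactorMap p B ⊥ MB.ρ φB →
      ∀ L : Subgroup (P.carrier × Q.carrier),
        A.prod B ≤ L →
        Subgroup.map (MonoidHom.fst P.carrier Q.carrier) L = ⊤ →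
        Subgroup.map (MonoidHom.snd P.carrier Q.carrier) L = ⊤ →
        ∀ C : RepB p L,
          IsCompositionFactorOf C.ρ
            ((Representation.tprod
              (MA.ρ.comp (MonoidHom.fst P.carrier Q.carrier))
              (MB.ρ.comp (MonoidHom.snd P.carrier Q.carrier))).comp L.subtype) →
          ∀ H : GrpB, IsSplitModuleExtension C.ρ H.carrier → IsPrimitiveGroup H.carrier →
            X H

/-- The class of groups `G` such that `G/N ∈ C`, expressed via surjective homomorphisms with
kernel `N`. -/
def QuotientIn (C : GrpB → Prop) (G : GrpB) (N : Subgroup G.carrier) : Prop :=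
  ∃ (H : GrpB) (π : G.carrier →* H.carrier), Function.Surjective π ∧ π.ker = N ∧ C H

/-- `C` is a formation (of finite soluble groups): it is closed under quotients, and
`G/(N ⊓ M) ∈ C` whenever `G/N ∈ C` and `G/M ∈ C`. -/
def IsFormation (C : GrpB → Prop) : Prop :=
  (∀ G : GrpB, Finite G.carrier → IsSolvable G.carrier → C G →
    ∀ (H : GrpB) (π : G.carrier →* H.carrier), Function.Surjective π → C H) ∧
  (∀ G : GrpB, Finite G.carrier → IsSolvable G.carrier →
    ∀ N M : Subgroup G.carrier, N.Normal → M.Normal →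
      QuotientIn C G N → QuotientIn C G M → QuotientIn C G (N ⊓ M))

/-- `C` is saturated: `G ∈ C` whenever `G` has a normal subgroup `A` contained in the Frattini
subgroup `Φ(G)` (the intersection of all maximal subgroups) with `G/A ∈ C`. -/
def IsSaturated (C : GrpB → Prop) : Prop :=
  ∀ G : GrpB, Finite G.carrier → IsSolvable G.carrier →
    ∀ A : Subgroup G.carrier, A.Normal →
      (∀ x ∈ A, ∀ M : Subgroup G.carrier, IsCoatom M → x ∈ M) →
      QuotientIn C G A → C G

/-- A saturated formation. -/
def IsSaturatedFormation (C : GrpB → Prop) : Prop :=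
  IsFormation C ∧ IsSaturated C

/-- The class of all finite soluble groups all of whose chief factors are `X`-central. -/
def FClass (X : GrpB → Prop) (G : GrpB) : Prop :=
  Finite G.carrier ∧ IsSolvable G.carrier ∧
    ∀ A B : Subgroup G.carrier, IsChiefFactor G.carrier A B → IsXCentral X G.carrier A B

/-- `pdef X`: the class of all finite soluble groups every primitive quotient of which lies
in `X`. -/
def PdefClass (X : GrpB → Prop) (G : GrpB) : Prop :=
  Finite G.carrier ∧ IsSolvable G.carrier ∧
    ∀ (H : GrpB) (π : G.carrier →* H.carrier), Function.Surjective π →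
      IsPrimitiveGroup H.carrier → X H

/-! ### Chief factors and minimal normal subgroups of soluble groups -/

/-- Chief factors of a soluble group are abelian. -/
theorem IsChiefFactor.conj_mul_inv_mem {G : Type} [Group G] [Group.IsSolvable G] {A B : Subgroup G}
    (h : IsChiefFactor G A B) {x y : G} (hx : x ∈ A) (hy : y ∈ A) :
    x * y * x⁻¹ * y⁻¹ ∈ B := by
  obtain ⟨hA, hB, hlt, hmin⟩ := h
  have hcomm : x * y * x⁻¹ * y⁻¹ ∈ ⁅A, A⁆ := Subgroup.commutator_mem_commutator hx hy
  rcases hmin (B ⊔ ⁅A, A⁆) inferInstance le_sup_left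
      (sup_le hlt.le (Subgroup.commutator_le_self A)) with h | h
  · rw [← h]
    exact Subgroup.mem_sup_right hcomm
  · exfalso
    have hmap : ⁅A.map (QuotientGroup.mk' B), A.map (QuotientGroup.mk' B)⁆
        = A.map (QuotientGroup.mk' B) := by
      conv_rhs => rw [← h]
      rw [Subgroup.map_sup, ← Subgroup.map_commutator, QuotientGroup.map_mk'_self, bot_sup_eq]
    have hne : A.map (QuotientGroup.mk' B) ≠ ⊥ := by
      intro h0
      rw [Subgroup.map_eq_bot_iff, QuotientGroup.ker_mk'] at h0
      exact hlt.not_ge h0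
    exact (Group.IsSolvable.commutator_lt_of_ne_bot hne).ne hmap

/-- A chief factor of a finite soluble group has prime exponent. -/
theorem IsChiefFactor.exists_prime_pow_mem {G : Type} [Group G] [Finite G] [Group.IsSolvable G]
    {A B : Subgroup G} (h : IsChiefFactor G A B) :
    ∃ r : ℕ, r.Prime ∧ ∀ x ∈ A, x ^ r ∈ B := by
  have hBn := h.2.1
  have hB1 : ∀ x, x ∈ B ↔ QuotientGroup.mk' B x = 1 :=
    fun x => (QuotientGroup.eq_one_iff x).symm
  have hc : ∀ x ∈ A, ∀ y ∈ A, Commute (QuotientGroup.mk' B x) (QuotientGroup.mk' B y) := by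
    intro x hx y hy
    have := h.conj_mul_inv_mem hx hy
    rwa [hB1, map_mul, map_mul, map_mul, map_inv, map_inv, mul_inv_eq_one,
      mul_inv_eq_iff_eq_mul] at this
  obtain ⟨hA, hB, hlt, hmin⟩ := h
  set Q := A.map (QuotientGroup.mk' B) with hQ
  have hne : Nat.card Q ≠ 1 := by
    intro h0
    rw [Subgroup.card_eq_one, hQ, Subgroup.map_eq_bot_iff, QuotientGroup.ker_mk'] at h0
    exact hlt.not_ge h0
  obtain ⟨r, hr, hdvd⟩ := Nat.exists_prime_and_dvd hne
  refine ⟨r, hr, ?_⟩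
  let N : Subgroup G :=
    { carrier := {x | x ∈ A ∧ x ^ r ∈ B}
      one_mem' := by simp [one_mem]
      mul_mem' := by
        rintro x y ⟨hx, hx'⟩ ⟨hy, hy'⟩
        refine ⟨mul_mem hx hy, ?_⟩
        rw [hB1, map_pow] at hx' hy' ⊢
        rw [map_mul, (hc x hx y hy).mul_pow, hx', hy', one_mul]
      inv_mem' := by
        rintro x ⟨hx, hx'⟩
        exact ⟨inv_mem hx, by rw [inv_pow]; exact inv_mem hx'⟩ }
  have hN : N.Normal := ⟨by
    rintro x ⟨hx, hx'⟩ g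
    exact ⟨hA.conj_mem x hx g, by rw [conj_pow]; exact hB.conj_mem _ hx' g⟩⟩
  rcases hmin N hN (fun x hx => ⟨hlt.le hx, pow_mem hx r⟩) (fun x hx => hx.1) with h | h
  · exfalso
    have : Fact r.Prime := ⟨hr⟩
    obtain ⟨⟨x, hx⟩, hx'⟩ := exists_prime_orderOf_dvd_card' r hdvd
    rw [Subgroup.orderOf_mk] at hx'
    obtain ⟨a, ha, rfl⟩ := hx
    have h1 : a ∈ N := by
      refine ⟨ha, ?_⟩
      rw [← QuotientGroup.eq_one_iff]
      have := pow_orderOf_eq_one (QuotientGroup.mk' B a)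
      rw [hx'] at this
      exact this
    rw [h, ← QuotientGroup.eq_one_iff] at h1
    rw [show QuotientGroup.mk' B a = 1 from h1, orderOf_one] at hx'
    exact hr.one_lt.ne hx'
  · intro x hx
    rw [← h] at hx
    exact hx.2

theorem exists_chiefFactor_above {G : Type} [Group G] [Finite G] {E D : Subgroup G}
    (hE : E.Normal) (hD : D.Normal) (hlt : E < D) :
    ∃ N : Subgroup G, N ≤ D ∧ IsChiefFactor G N E := by
  obtain ⟨N, ⟨hN, hEN, hND⟩, hmin⟩ :=
    (Set.toFinite {N : Subgroup G | N.Normal ∧ E < N ∧ N ≤ D}).exists_minimal ⟨D, hD, hlt, le_rfl⟩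
  refine ⟨N, hND, hN, hE, hEN, fun M hM hEM hMN => ?_⟩
  by_cases h : M = E
  · exact Or.inl h
  · exact Or.inr (le_antisymm hMN
      (hmin ⟨hM, lt_of_le_of_ne hEM (Ne.symm h), hMN.trans hND⟩ hMN))

/-- Frattini argument: if `N / E` is an `r`-group, then a Sylow `r`-subgroup `R` of `N` supplements
`E` in `N` and its normalizer supplements `E` in `G`. -/
theorem exists_sylow_supplement {G : Type} [Group G] [Finite G] {N E : Subgroup G}
    (hN : N.Normal) (hE : E.Normal) (hEN : E ≤ N) {r : ℕ} (hr : r.Prime)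
    (hNE : ∀ x ∈ N, ∃ k : ℕ, x ^ r ^ k ∈ E) :
    ∃ R : Subgroup G, IsPGroup r R ∧ E ⊔ R = N ∧
      Subgroup.normalizer (R : Set G) ⊔ E = ⊤ := by
  have : Fact r.Prime := ⟨hr⟩
  obtain ⟨P⟩ : Nonempty (Sylow r N) := inferInstance
  have hsup : E.subgroupOf N ⊔ P = ⊤ := by
    have hp : IsPGroup r (N ⧸ E.subgroupOf N) := by
      intro x
      induction x using QuotientGroup.induction_on with
      | H z =>
        obtain ⟨k, hk⟩ := hNE z z.2
        refine ⟨k, ?_⟩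
        rw [← QuotientGroup.mk_pow, QuotientGroup.eq_one_iff]
        exact hk
    obtain ⟨n, hn⟩ := IsPGroup.iff_card.1 hp
    have h1 : (E.subgroupOf N ⊔ P).index ∣ r ^ n := by
      rw [← hn]
      exact Subgroup.index_dvd_of_le le_sup_left
    have h2 : (E.subgroupOf N ⊔ P).index ∣ (P : Subgroup N).index :=
      Subgroup.index_dvd_of_le le_sup_right
    rw [← Subgroup.index_eq_one]
    have hc : Nat.Coprime (r ^ n) (P : Subgroup N).index :=
      Nat.Coprime.pow_left _ ((Nat.Prime.coprime_iff_not_dvd hr).2 P.not_dvd_index)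
    exact Nat.eq_one_of_dvd_coprimes hc h1 h2
  have hER : E ⊔ (P : Subgroup N).map N.subtype = N := by
    have := congrArg (Subgroup.map N.subtype) hsup
    rw [Subgroup.map_sup, Subgroup.subgroupOf_map_subtype, inf_of_le_left hEN] at this
    rw [this, ← MonoidHom.range_eq_map, Subgroup.range_subtype]
  refine ⟨(P : Subgroup N).map N.subtype, P.2.map _, hER, ?_⟩
  rw [eq_top_iff, ← P.normalizer_sup_eq_top]
  refine sup_le le_sup_left ?_
  conv_lhs => rw [← hER]
  exact sup_le le_sup_right (Subgroup.le_normalizer.trans le_sup_left)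

/-- An abelian minimal normal subgroup either has a complement or has no proper supplement. -/
theorem complement_or_nonsupplement {G : Type} [Group G] {A : Subgroup G}
    (hA : IsMinimalNormalSubgroup G A) (hab : ∀ x ∈ A, ∀ y ∈ A, x * y = y * x) :
    (∃ S : Subgroup G, A ⊔ S = ⊤ ∧ A ⊓ S = ⊥) ∨ ∀ S : Subgroup G, A ⊔ S = ⊤ → S = ⊤ := by
  by_contra hcon
  push Not at hcon
  obtain ⟨h1, S, hS, hS'⟩ := hcon
  have := hA.1
  have hn : (A ⊓ S).Normal := by
    refine ⟨fun x hx g => ?_⟩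
    have hg : g ∈ A ⊔ S := hS ▸ Subgroup.mem_top g
    rw [Subgroup.mem_sup_of_normal_left] at hg
    obtain ⟨a, ha, s, hs, rfl⟩ := hg
    have h2 : s * x * s⁻¹ ∈ A ⊓ S :=
      ⟨hA.1.conj_mem x hx.1 s, S.mul_mem (S.mul_mem hs hx.2) (S.inv_mem hs)⟩
    have h3 : a * s * x * (a * s)⁻¹ = s * x * s⁻¹ := by
      rw [show a * s * x * (a * s)⁻¹ = a * (s * x * s⁻¹) * a⁻¹ by group,
        hab a ha _ h2.1, mul_inv_cancel_right]
    rw [h3]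
    exact h2
  rcases hA.2.2 (A ⊓ S) hn inf_le_left with h | h
  · exact h1 S hS h
  · exact hS' (by rw [← hS]; exact (sup_eq_right.2 (inf_eq_left.1 h)).symm)

/-- If `A` is the unique minimal normal subgroup, then a normal `q`-subgroup centralizes `A`. -/
theorem pgroup_centralizes_monolith {G : Type} [Group G] [Finite G] {A D : Subgroup G}
    (hmono : ∀ N : Subgroup G, N.Normal → N ≠ ⊥ → A ≤ N)
    (hD : D.Normal) {q : ℕ} (hq : q.Prime) (hDq : IsPGroup q D) :
    ∀ d ∈ D, ∀ a ∈ A, d * a = a * d := by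
  have : Fact q.Prime := ⟨hq⟩
  intro d hd a ha
  by_cases hbot : D = ⊥
  · rw [hbot, Subgroup.mem_bot] at hd
    simp [hd]
  · have : Nontrivial D := (Subgroup.nontrivial_iff_ne_bot D).2 hbot
    have hZ : Nontrivial (Subgroup.center D) := hDq.center_nontrivial
    have hne : (Subgroup.center D).map D.subtype ≠ ⊥ := by
      rw [Ne, Subgroup.map_eq_bot_iff_of_injective _ D.subtype_injective]
      exact (Subgroup.nontrivial_iff_ne_bot _).1 hZ
    obtain ⟨z, hz, rfl⟩ := hmono _ inferInstance hne ha
    exact congrArg Subtype.val (Subgroup.mem_center_iff.1 hz ⟨d, hd⟩)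

/-! ### Normal subgroups centralizing the chief factors above a monolith -/

/-- Coprime action: an `r`-element `x` which centralizes `n` modulo a `q`-subgroup `K` that it
centralizes modulo `A` already centralizes `n` modulo `A`. -/
theorem coprime_commutator_mem {G : Type} [Group G] {A : Subgroup G} (hA : A.Normal)
    {q r : ℕ} (hq : q.Prime) (hr : r.Prime) (hqr : q ≠ r) {x n c : G}
    (hx : ∃ k : ℕ, x ^ r ^ k = 1) (hc : ∃ k : ℕ, c ^ q ^ k = 1)
    (hn : x * n * x⁻¹ = c * n) (hxc : x * c * x⁻¹ * c⁻¹ ∈ A) : c ∈ A := by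
  have hA1 : ∀ x, x ∈ A ↔ QuotientGroup.mk' A x = 1 :=
    fun x => (QuotientGroup.eq_one_iff x).symm
  obtain ⟨k, hk⟩ := hx
  obtain ⟨l, hl⟩ := hc
  rw [hA1] at hxc ⊢
  have hk' := congrArg (QuotientGroup.mk' A) hk
  have hl' := congrArg (QuotientGroup.mk' A) hl
  have hn' := congrArg (QuotientGroup.mk' A) hn
  simp only [map_mul, map_inv, map_pow, map_one] at hxc hk' hl' hn'
  generalize QuotientGroup.mk' A x = x at *
  generalize QuotientGroup.mk' A n = n at *
  generalize QuotientGroup.mk' A c = c at *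
  rw [mul_inv_eq_one, mul_inv_eq_iff_eq_mul] at hxc
  rw [mul_inv_eq_iff_eq_mul] at hn'
  have hcomm : Commute x c := hxc
  -- iterating conjugation by `x` multiplies `n` by powers of `c`
  have key : ∀ m : ℕ, x ^ m * n = c ^ m * n * x ^ m := by
    intro m
    induction m with
    | zero => simp
    | succ m ih =>
      calc x ^ (m + 1) * n = x ^ m * (x * n) := by rw [pow_succ, mul_assoc]
        _ = x ^ m * c * n * x := by rw [hn']; group
        _ = c * (x ^ m * n) * x := by rw [(hcomm.pow_left m).eq]; group
        _ = c ^ (m + 1) * n * x ^ (m + 1) := by rw [ih, pow_succ' c, pow_succ x]; group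
  have h1 := key (r ^ k)
  rw [hk', one_mul, mul_one, right_eq_mul] at h1
  have h2 : orderOf c ∣ r ^ k := orderOf_dvd_of_pow_eq_one h1
  have h3 : orderOf c ∣ q ^ l := orderOf_dvd_of_pow_eq_one hl'
  rw [← orderOf_eq_one_iff]
  exact Nat.eq_one_of_dvd_coprimes
    (Nat.Coprime.pow _ _ ((Nat.coprime_primes hr hq).2 hqr.symm)) h2 h3

/-- Let `A` be the unique minimal normal subgroup of the finite soluble group `G`, a `q`-group
lying in every maximal subgroup. A normal subgroup `D` of `G` which centralizes every
`q`-chief factor of `G` above `A` is a `q`-group. Otherwise there are a normal `q`-subgroup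
`E ≥ A` and a chief factor `N / E` below `D` that is an `r`-group with `r ≠ q`; a Sylow
`r`-subgroup of `N` centralizes `E / A` by coprime action, and two Frattini arguments produce a
normal `r`-subgroup of `G`. -/
theorem isPGroup_of_centralizes_chiefFactors {G : Type} [Group G] [Finite G] [Group.IsSolvable G]
    {A : Subgroup G} (hA : A.Normal) (hA1 : A ≠ ⊥)
    (hmono : ∀ N : Subgroup G, N.Normal → N ≠ ⊥ → A ≤ N)
    {q : ℕ} (hq : q.Prime) (hAq : IsPGroup q A)
    (hns : ∀ S : Subgroup G, A ⊔ S = ⊤ → S = ⊤)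
    {D : Subgroup G} (hD : D.Normal)
    (hcent : ∀ A₁ B₁ : Subgroup G, IsChiefFactor G A₁ B₁ → A ≤ B₁ → IsPGroup q A₁ →
      ∀ d ∈ D, ∀ a ∈ A₁, d * a * d⁻¹ * a⁻¹ ∈ B₁) : IsPGroup q D := by
  by_cases hD0 : D = ⊥
  · rw [hD0]; exact IsPGroup.of_bot
  have hAD : A ≤ D := hmono D hD hD0
  obtain ⟨E, ⟨hE, hAE, hED, hEq⟩, hEmax⟩ :=
    (Set.toFinite {E : Subgroup G | E.Normal ∧ A ≤ E ∧ E ≤ D ∧ IsPGroup q E}).exists_maximal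
      ⟨A, hA, le_rfl, hAD, hAq⟩
  by_cases hne : E = D
  · rwa [← hne]
  exfalso
  obtain ⟨N, hND, hch⟩ := exists_chiefFactor_above hE hD (lt_of_le_of_ne hED hne)
  obtain ⟨r, hr, hNr⟩ := hch.exists_prime_pow_mem
  have hN := hch.1
  have hEN := hch.2.2.1
  have hqr : q ≠ r := by
    rintro rfl
    refine hEN.not_ge (hEmax ⟨hN, hAE.trans hEN.le, hND, ?_⟩ hEN.le)
    rintro ⟨x, hx⟩
    obtain ⟨k, hk⟩ := hEq ⟨x ^ q, hNr x hx⟩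
    refine ⟨k + 1, Subtype.ext ?_⟩
    have := congrArg Subtype.val hk
    simp only [Subgroup.coe_pow, Subgroup.coe_one] at this ⊢
    rw [pow_succ', pow_mul, this]
  obtain ⟨R, hR, hER, hRn⟩ := exists_sylow_supplement hN hE hEN.le hr
    (fun x hx => ⟨1, by simpa using hNr x hx⟩)
  have hRN : R ≤ N := hER ▸ le_sup_right
  have hRpow : ∀ x ∈ R, ∃ k : ℕ, x ^ r ^ k = 1 := by
    intro x hx
    obtain ⟨k, hk⟩ := hR ⟨x, hx⟩
    exact ⟨k, by simpa using congrArg Subtype.val hk⟩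
  have hEpow : ∀ x ∈ E, ∃ k : ℕ, x ^ q ^ k = 1 := by
    intro x hx
    obtain ⟨k, hk⟩ := hEq ⟨x, hx⟩
    exact ⟨k, by simpa using congrArg Subtype.val hk⟩
  have hERA : ∀ x ∈ R, ∀ n ∈ E, x * n * x⁻¹ * n⁻¹ ∈ A := by
    obtain ⟨K, ⟨hK, hAK, hKE, hKc⟩, hKmax⟩ :=
      (Set.toFinite {K : Subgroup G | K.Normal ∧ A ≤ K ∧ K ≤ E ∧
        ∀ x ∈ R, ∀ n ∈ K, x * n * x⁻¹ * n⁻¹ ∈ A}).exists_maximal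
      ⟨A, hA, le_rfl, hAE, fun x _ n hn => mul_mem (hA.conj_mem n hn x) (inv_mem hn)⟩
    by_cases hKE' : K = E
    · rwa [← hKE']
    exfalso
    obtain ⟨K', hK'E, hch'⟩ := exists_chiefFactor_above hK hE (lt_of_le_of_ne hKE hKE')
    refine hch'.2.2.1.not_ge (hKmax ⟨hch'.1, hAK.trans hch'.2.2.1.le, hK'E, ?_⟩ hch'.2.2.1.le)
    intro x hx n hn
    have hcK : x * n * x⁻¹ * n⁻¹ ∈ K :=
      hcent K' K hch' hAK (hEq.to_le hK'E) x (hND (hRN hx)) n hn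
    exact coprime_commutator_mem hA hq hr hqr (hRpow x hx) (hEpow _ (hKE hcK))
      (n := n) (by group) (hKc x hx _ hcK)
  have hW : (A ⊔ R).Normal := by
    rw [← Subgroup.normalizer_eq_top_iff, eq_top_iff, ← hRn]
    refine sup_le ?_ ?_
    · intro g hg
      rw [Subgroup.mem_normalizer_iff_map_conj_eq, Subgroup.map_sup]
      rw [Subgroup.mem_normalizer_iff_map_conj_eq] at hg
      rw [hg]
      congr 1
      exact hA.map_conj_eq A g
    · have hcl : ∀ g ∈ E, ∀ h ∈ A ⊔ R, g * h * g⁻¹ ∈ A ⊔ R := by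
        intro g hg h hh
        rw [Subgroup.mem_sup_of_normal_left] at hh
        obtain ⟨a, ha, s, hs, rfl⟩ := hh
        have h1 := inv_mem (hERA s hs g hg)
        rw [show g * (a * s) * g⁻¹ = g * a * g⁻¹ * ((s * g * s⁻¹ * g⁻¹)⁻¹ * s) by group]
        exact mul_mem (Subgroup.mem_sup_left (hA.conj_mem a ha g))
          (mul_mem (Subgroup.mem_sup_left h1) (Subgroup.mem_sup_right hs))
      intro g hg
      rw [Subgroup.mem_normalizer_iff]
      refine fun h => ⟨hcl g hg h, fun hh => ?_⟩
      have := hcl g⁻¹ (inv_mem hg) _ hh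
      rwa [show g⁻¹ * (g * h * g⁻¹) * g⁻¹⁻¹ = h by group] at this
  have hWA : ∀ x ∈ A ⊔ R, ∃ k : ℕ, x ^ r ^ k ∈ A := by
    intro x hx
    rw [Subgroup.mem_sup_of_normal_left] at hx
    obtain ⟨a, ha, s, hs, rfl⟩ := hx
    obtain ⟨k, hk⟩ := hRpow s hs
    refine ⟨k, ?_⟩
    rw [← QuotientGroup.eq_one_iff (N := A)] at ha ⊢
    rw [QuotientGroup.mk_pow, QuotientGroup.mk_mul, ha, one_mul, ← QuotientGroup.mk_pow, hk,
      QuotientGroup.mk_one]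
  obtain ⟨R', hR', hAR', hRn'⟩ := exists_sylow_supplement hW hA le_sup_left hr hWA
  have hR'n : R'.Normal := by
    rw [← Subgroup.normalizer_eq_top_iff]
    exact hns _ (by rw [sup_comm]; exact hRn')
  by_cases hR'0 : R' = ⊥
  · rw [hR'0, sup_bot_eq] at hAR'
    have hRA : R ≤ A := hAR' ▸ le_sup_right
    rw [sup_eq_left.2 (hRA.trans hAE)] at hER
    exact hEN.ne hER
  · have hAR := hmono R' hR'n hR'0
    have : Fact q.Prime := ⟨hq⟩
    have : Fact r.Prime := ⟨hr⟩
    have := IsPGroup.disjoint_of_ne q r hqr A R' hAq hR'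
    exact hA1 (by rwa [disjoint_iff, inf_eq_left.2 hAR] at this)

/-- In a primitive group the self-centralizing minimal normal subgroup is contained in every
nontrivial normal subgroup. -/
theorem primitive_le_of_normal {G : Type} [Group G] {K : Subgroup G}
    (hK : IsMinimalNormalSubgroup G K) (hc : Subgroup.centralizer (K : Set G) = K)
    (N : Subgroup G) (hN : N.Normal) (hN0 : N ≠ ⊥) : K ≤ N := by
  have := hK.1
  rcases hK.2.2 (K ⊓ N) inferInstance inf_le_left with h | h
  · exfalso
    apply hN0
    have hle : N ≤ K := by
      rw [← hc]
      intro n hn k hk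
      have h1 : k * n * k⁻¹ * n⁻¹ ∈ K ⊓ N := by
        refine ⟨?_, N.mul_mem (hN.conj_mem n hn k) (N.inv_mem hn)⟩
        rw [show k * n * k⁻¹ * n⁻¹ = k * (n * k⁻¹ * n⁻¹) by group]
        exact mul_mem hk (hK.1.conj_mem _ (inv_mem hk) n)
      rw [h, Subgroup.mem_bot, mul_inv_eq_one, mul_inv_eq_iff_eq_mul] at h1
      exact h1
    rwa [inf_eq_right.2 hle] at h
  · exact inf_eq_left.1 h

/-- The socle of a finite soluble primitive group is complemented. -/
theorem primitive_complement {G : Type} [Group G] [Finite G] [Group.IsSolvable G] {K : Subgroup G}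
    (hK : IsMinimalNormalSubgroup G K) (hc : Subgroup.centralizer (K : Set G) = K) :
    ∃ S : Subgroup G, K ⊔ S = ⊤ ∧ K ⊓ S = ⊥ := by
  have hmono := primitive_le_of_normal hK hc
  have hab : ∀ x ∈ K, ∀ y ∈ K, x * y = y * x := by
    intro x hx y hy
    rw [← hc] at hy
    exact hy x hx
  rcases complement_or_nonsupplement hK hab with h | h
  · exact h
  have hch : IsChiefFactor G K ⊥ :=
    ⟨hK.1, inferInstance, bot_lt_iff_ne_bot.2 hK.2.1, fun N hN _ h => hK.2.2 N hN h⟩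
  obtain ⟨q, hq, hKq⟩ := hch.exists_prime_pow_mem
  have hKq' : IsPGroup q K := fun x => ⟨1, Subtype.ext (by simpa using hKq x x.2)⟩
  have hle : ∀ D : Subgroup G, D.Normal → IsPGroup q D → D ≤ K := by
    intro D hD hDq
    rw [← hc]
    exact fun d hd k hk => (pgroup_centralizes_monolith hmono hD hq hDq d hd k hk).symm
  have htop : IsPGroup q (⊤ : Subgroup G) := by
    refine isPGroup_of_centralizes_chiefFactors hK.1 hK.2.1 hmono hq hKq' h inferInstance ?_
    intro A₁ B₁ hch₁ hKB hA₁
    exact absurd (hle A₁ hch₁.1 hA₁) (fun h' => hch₁.2.2.1.not_ge (h'.trans hKB))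
  exact ⟨⊥, by rw [sup_bot_eq, eq_top_iff]; exact hle _ inferInstance htop, by simp⟩

/-! ### Subquotients and tensor products of representations -/

/-- `σ` is isomorphic to a quotient of a subrepresentation of `ρ`. -/
def IsSubquotient {p : ℕ} {G C U : Type} [Group G] [AddCommGroup C] [Module (ZMod p) C]
    [AddCommGroup U] [Module (ZMod p) U]
    (σ : Representation (ZMod p) G C) (ρ : Representation (ZMod p) G U) : Prop :=
  ∃ (T : Submodule (ZMod p) U) (ψ : T →ₗ[ZMod p] C),
    (∀ g : G, ∀ x ∈ T, ρ g x ∈ T) ∧ Function.Surjective ψ ∧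
    ∀ (g : G) (t t' : T), (t' : U) = ρ g t → ψ t' = σ g (ψ t)

section Reps

variable {p : ℕ} {G C U U₁ U₃ : Type} [Group G] [AddCommGroup C] [Module (ZMod p) C]
  [AddCommGroup U] [Module (ZMod p) U] [AddCommGroup U₁] [Module (ZMod p) U₁]
  [AddCommGroup U₃] [Module (ZMod p) U₃]

theorem IsSubquotient.isCompositionFactorOf {σ : Representation (ZMod p) G C}
    {ρ : Representation (ZMod p) G U} (h : IsSubquotient σ ρ) (hσ : IsIrreducibleRep σ) :
    IsCompositionFactorOf σ ρ := by
  obtain ⟨T, ψ, hT, hψ, heq⟩ := h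
  refine ⟨hσ, T, (LinearMap.ker ψ).map T.subtype, hT, ?_, ?_, ψ, hψ, ?_, heq⟩
  · rintro g _ ⟨t, ht, rfl⟩
    refine ⟨⟨ρ g t, hT g t t.2⟩, ?_, rfl⟩
    have := heq g t ⟨ρ g t, hT g t t.2⟩ rfl
    rw [SetLike.mem_coe, LinearMap.mem_ker] at ht ⊢
    rw [this, ht, map_zero]
  · rintro _ ⟨t, _, rfl⟩
    exact t.2
  · intro t
    constructor
    · intro h0
      exact ⟨t, h0, rfl⟩
    · rintro ⟨t', h0, h1⟩
      rw [← Subtype.ext h1]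
      exact h0

theorem IsSubquotient.of_injective {σ : Representation (ZMod p) G C}
    {ρ₁ : Representation (ZMod p) G U₁} {ρ : Representation (ZMod p) G U}
    (i : U₁ →ₗ[ZMod p] U) (hi : Function.Injective i) (hρ : ∀ g x, i (ρ₁ g x) = ρ g (i x))
    (h : IsSubquotient σ ρ₁) : IsSubquotient σ ρ := by
  obtain ⟨T, ψ, hT, hψ, heq⟩ := h
  let e := Submodule.equivMapOfInjective i hi T
  refine ⟨T.map i, ψ ∘ₗ e.symm.toLinearMap, ?_, hψ.comp e.symm.surjective, ?_⟩
  · rintro g _ ⟨x, hx, rfl⟩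
    exact ⟨ρ₁ g x, hT g x hx, hρ g x⟩
  · intro g t t' htt
    obtain ⟨s, rfl⟩ := e.surjective t
    obtain ⟨s', rfl⟩ := e.surjective t'
    simp only [LinearMap.comp_apply, LinearEquiv.coe_coe, LinearEquiv.symm_apply_apply]
    apply heq
    apply hi
    rw [hρ]
    exact htt

theorem IsSubquotient.of_surjective {σ : Representation (ZMod p) G C}
    {ρ₃ : Representation (ZMod p) G U₃} {ρ : Representation (ZMod p) G U}
    (f : U →ₗ[ZMod p] U₃) (hf : Function.Surjective f) (hρ : ∀ g x, f (ρ g x) = ρ₃ g (f x))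
    (h : IsSubquotient σ ρ₃) : IsSubquotient σ ρ := by
  obtain ⟨T, ψ, hT, hψ, heq⟩ := h
  refine ⟨T.comap f, ψ ∘ₗ f.restrict (fun x hx => hx), ?_, ?_, ?_⟩
  · intro g x hx
    rw [Submodule.mem_comap, hρ]
    exact hT g _ hx
  · intro c
    obtain ⟨t, rfl⟩ := hψ c
    obtain ⟨x, hx⟩ := hf t
    refine ⟨⟨x, by rw [Submodule.mem_comap, hx]; exact t.2⟩, ?_⟩
    exact congrArg ψ (Subtype.ext hx)
  · intro g t t' htt
    apply heq
    change f t' = ρ₃ g (f t)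
    rw [htt, hρ]

/-- An irreducible subquotient of the middle term of an exact sequence of representations is a
subquotient of one of the outer terms. -/
theorem IsSubquotient.of_exact {σ : Representation (ZMod p) G C} (hσ : IsIrreducibleRep σ)
    {ρ₁ : Representation (ZMod p) G U₁} {ρ : Representation (ZMod p) G U}
    {ρ₃ : Representation (ZMod p) G U₃}
    (i : U₁ →ₗ[ZMod p] U) (f : U →ₗ[ZMod p] U₃) (hif : Function.Exact i f)
    (hi : ∀ g x, i (ρ₁ g x) = ρ g (i x)) (hf : ∀ g x, f (ρ g x) = ρ₃ g (f x))
    (h : IsSubquotient σ ρ) : IsSubquotient σ ρ₁ ∨ IsSubquotient σ ρ₃ := by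
  obtain ⟨T, ψ, hT, hψ, heq⟩ := h
  -- the image under `ψ` of `T ⊓ ker f` is invariant, so it is zero or everything
  have hinv : ∀ (g : G), ∀ v ∈ (LinearMap.ker (f ∘ₗ T.subtype)).map ψ,
      σ g v ∈ (LinearMap.ker (f ∘ₗ T.subtype)).map ψ := by
    rintro g _ ⟨t, ht, rfl⟩
    refine ⟨⟨ρ g t, hT g t t.2⟩, ?_, heq g t ⟨ρ g t, hT g t t.2⟩ rfl⟩
    have ht' : f t = 0 := ht
    change f (ρ g t) = 0
    rw [hf, ht', map_zero]
  rcases hσ.2 _ hinv with h | h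
  · right
    have hker : ∀ t : T, f t = 0 → ψ t = 0 := by
      intro t ht
      have : ψ t ∈ (LinearMap.ker (f ∘ₗ T.subtype)).map ψ := ⟨t, ht, rfl⟩
      rwa [h, Submodule.mem_bot] at this
    let f' : T →ₗ[ZMod p] T.map f := f.submoduleMap T
    have hf' : Function.Surjective f' := f.submoduleMap_surjective T
    have hle : LinearMap.ker f' ≤ LinearMap.ker ψ := by
      intro t ht
      exact hker t (congrArg Subtype.val ht)
    let ψ' : T.map f →ₗ[ZMod p] C :=
      (LinearMap.ker f').liftQ ψ hle ∘ₗ (f'.quotKerEquivOfSurjective hf').symm.toLinearMap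
    have hψ' : ∀ t : T, ψ' (f' t) = ψ t := by
      intro t
      have : (f'.quotKerEquivOfSurjective hf').symm (f' t) = (LinearMap.ker f').mkQ t := by
        rw [LinearEquiv.symm_apply_eq]
        rfl
      change (LinearMap.ker f').liftQ ψ hle ((f'.quotKerEquivOfSurjective hf').symm (f' t)) = _
      rw [this]
      simp
    refine ⟨T.map f, ψ', ?_, ?_, ?_⟩
    · rintro g _ ⟨x, hx, rfl⟩
      exact ⟨ρ g x, hT g x hx, hf g x⟩
    · intro c
      obtain ⟨t, rfl⟩ := hψ c
      exact ⟨f' t, hψ' t⟩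
    · intro g s s' hss
      obtain ⟨t, rfl⟩ := hf' s
      have : s' = f' ⟨ρ g t, hT g t t.2⟩ := by
        apply Subtype.ext
        rw [hss]
        exact (hf g t).symm
      rw [this, hψ', hψ']
      exact heq g t _ rfl
  · left
    refine ⟨T.comap i, ψ ∘ₗ i.restrict (fun x hx => hx), ?_, ?_, ?_⟩
    · intro g x hx
      rw [Submodule.mem_comap, hi]
      exact hT g _ hx
    · intro c
      have hc : c ∈ (LinearMap.ker (f ∘ₗ T.subtype)).map ψ := h ▸ Submodule.mem_top
      obtain ⟨t, ht, rfl⟩ := hc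
      obtain ⟨x, hx⟩ := (hif t).1 ht
      refine ⟨⟨x, by rw [Submodule.mem_comap, hx]; exact t.2⟩, ?_⟩
      exact congrArg ψ (Subtype.ext hx)
    · intro g t t' htt
      apply heq
      change i t' = ρ g (i t)
      rw [htt, hi]

end Reps

section Burnside

variable {p : ℕ} {G : Type} [Group G]

/-- All irreducible subquotients of `U` lie in `R`. -/
def IsGoodRep (R : RepB p G → Prop) (U : RepB p G) : Prop :=
  ∀ C : RepB p G, IsIrreducibleRep C.ρ → IsSubquotient C.ρ U.ρ → R C

/-- The tensor product of bundled representations. -/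
noncomputable def RepB.tensor (U V : RepB p G) : RepB p G :=
  ⟨U.V ⊗[ZMod p] V.V, Representation.tprod U.ρ V.ρ⟩

/-- The direct sum of bundled representations. -/
noncomputable def RepB.prod (U V : RepB p G) : RepB p G :=
  ⟨U.V × V.V, Representation.prod U.ρ V.ρ⟩

theorem IsGoodRep.prod {R : RepB p G → Prop} {U V : RepB p G} (hU : IsGoodRep R U)
    (hV : IsGoodRep R V) : IsGoodRep R (U.prod V) := by
  intro C hC h
  rcases IsSubquotient.of_exact hC (ρ₁ := U.ρ) (ρ₃ := V.ρ)
    (LinearMap.inl (ZMod p) U.V V.V) (LinearMap.snd (ZMod p) U.V V.V)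
    Function.Exact.inl_snd (fun g x => by simp [RepB.prod]) (fun g x => rfl) h with h | h
  · exact hU C hC h
  · exact hV C hC h

/-- Tensoring with a member of `R` preserves the property that all composition factors are in
`R`, by induction along a composition series of `U`. -/
theorem IsGoodRep.tensor [Fact p.Prime] {R : RepB p G → Prop}
    (hR : ∀ U V : RepB p G, R U → R V → IsGoodRep R (U.tensor V)) {V : RepB p G} (hV : R V) :
    ∀ (n : ℕ) (U : RepB p G), Finite U.V → Nat.card U.V = n → IsGoodRep R U →
      IsGoodRep R (U.tensor V) := by
  intro n
  induction n using Nat.strong_induction_on with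
  | _ n ih =>
    intro U hfin hn hU
    by_cases hirr : IsIrreducibleRep U.ρ
    · refine hR U V (hU U hirr ⟨⊤, Submodule.topEquiv.toLinearMap, fun _ _ _ => trivial,
        Submodule.topEquiv.surjective, fun g t t' h => h⟩) hV
    by_cases hnt : Nontrivial U.V
    · have : ∃ S : Submodule (ZMod p) U.V, (∀ (g : G), ∀ v ∈ S, U.ρ g v ∈ S) ∧ S ≠ ⊥ ∧ S ≠ ⊤ := by
        by_contra hcon
        push Not at hcon
        exact hirr ⟨hnt, fun S hS => or_iff_not_imp_left.2 (hcon S hS)⟩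
      obtain ⟨S, hS, hS0, hS1⟩ := this
      let U₁ : RepB p G := ⟨S, Representation.subrepresentation U.ρ S (fun g v hv => hS g v hv)⟩
      let U₃ : RepB p G := ⟨U.V ⧸ S, Representation.quotient U.ρ S (fun g v hv => hS g v hv)⟩
      have hcard : Nat.card U.V = Nat.card S * Nat.card (U.V ⧸ S) :=
        S.card_eq_card_quotient_mul_card
      have h1 : 1 < Nat.card S := by
        have := (Submodule.nontrivial_iff_ne_bot (p := S)).2 hS0
        exact Finite.one_lt_card
      have hfq : Finite (U.V ⧸ S) := Finite.of_surjective _ S.mkQ_surjective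
      have h3 : 1 < Nat.card (U.V ⧸ S) := by
        have := Submodule.Quotient.nontrivial_iff.2 hS1
        exact Finite.one_lt_card
      have g1 : IsGoodRep R U₁ := fun C hC h =>
        hU C hC (IsSubquotient.of_injective S.subtype S.subtype_injective (fun g x => rfl) h)
      have g3 : IsGoodRep R U₃ := fun C hC h =>
        hU C hC (IsSubquotient.of_surjective S.mkQ S.mkQ_surjective (fun g x => rfl) h)
      have t1 := ih (Nat.card S) (by nlinarith) U₁ (inferInstanceAs (Finite S)) rfl g1
      have t3 := ih (Nat.card (U.V ⧸ S)) (by nlinarith) U₃ hfq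
        rfl g3
      intro C hC h
      have hex : Function.Exact S.subtype S.mkQ := LinearMap.exact_subtype_mkQ S
      have e1 : ∀ g, (S.subtype.rTensor V.V) ∘ₗ (U₁.tensor V).ρ g =
          (U.tensor V).ρ g ∘ₗ (S.subtype.rTensor V.V) := by
        intro g
        exact TensorProduct.ext' fun x y => rfl
      have e3 : ∀ g, (S.mkQ.rTensor V.V) ∘ₗ (U.tensor V).ρ g =
          (U₃.tensor V).ρ g ∘ₗ (S.mkQ.rTensor V.V) := by
        intro g
        exact TensorProduct.ext' fun x y => rfl
      rcases IsSubquotient.of_exact hC (ρ₁ := (U₁.tensor V).ρ) (ρ₃ := (U₃.tensor V).ρ)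
        (S.subtype.rTensor V.V) (S.mkQ.rTensor V.V) (Module.Flat.rTensor_exact V.V hex)
        (fun g x => LinearMap.congr_fun (e1 g) x) (fun g x => LinearMap.congr_fun (e3 g) x) h
        with h | h
      · exact t1 C hC h
      · exact t3 C hC h
    · intro C hC h
      exfalso
      obtain ⟨T, ψ, -, hψ, -⟩ := h
      have hsub : Subsingleton U.V := not_nontrivial_iff_subsingleton.1 hnt
      have hsub' : Subsingleton (U.V ⊗[ZMod p] V.V) := inferInstance
      have : Subsingleton (U.tensor V).V := hsub'
      have : Subsingleton C.V := hψ.subsingleton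
      exact not_subsingleton_iff_nontrivial.2 hC.1 this

end Burnside

/-! ### The Burnside–Steinberg theorem -/

section Steinberg

variable {p : ℕ} {G : Type} [Group G]

/-- `f` is a matrix coefficient of a finite representation all of whose composition factors lie
in `R`. -/
def IsGoodCoefficient (R : RepB p G → Prop) (f : G → ZMod p) : Prop :=
  ∃ U : RepB p G, Finite U.V ∧ IsGoodRep R U ∧
    ∃ (l : U.V →ₗ[ZMod p] ZMod p) (u : U.V), ∀ g, f g = l (U.ρ g u)

/-- Good coefficients are stable under multiplication by `m(ρ_V(g) v) + c`: the product is a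
coefficient of `(U ⊗ V) ⊕ U`. -/
theorem IsGoodCoefficient.mul_add [Fact p.Prime] {R : RepB p G → Prop}
    (hR : ∀ U V : RepB p G, R U → R V → IsGoodRep R (U.tensor V)) {f : G → ZMod p}
    (hf : IsGoodCoefficient R f) {V : RepB p G} (hV : R V) (hfin : Finite V.V)
    (m : V.V →ₗ[ZMod p] ZMod p) (v : V.V) (c : ZMod p) :
    IsGoodCoefficient R (fun g => f g * (m (V.ρ g v) + c)) := by
  obtain ⟨U, hU, hgood, l, u, hl⟩ := hf
  have hUV : Finite (U.V ⊗[ZMod p] V.V) := Module.finite_of_finite (ZMod p)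
  refine ⟨(U.tensor V).prod U, inferInstanceAs (Finite ((U.V ⊗[ZMod p] V.V) × U.V)),
    (IsGoodRep.tensor hR hV _ U hU rfl hgood).prod hgood,
    LinearMap.coprod ((TensorProduct.lid (ZMod p) (ZMod p)).toLinearMap ∘ₗ
      TensorProduct.map l m) (c • l), (u ⊗ₜ v, u), fun g => ?_⟩
  change f g * (m (V.ρ g v) + c) = l (U.ρ g u) * m (V.ρ g v) + c * l (U.ρ g u)
  rw [hl]
  ring

theorem exists_linear_ne_zero [Fact p.Prime] {V : Type} [AddCommGroup V] [Module (ZMod p) V]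
    {v : V} (hv : v ≠ 0) : ∃ l : V →ₗ[ZMod p] ZMod p, l v ≠ 0 := by
  by_contra h
  push Not at h
  exact hv ((Module.forall_dual_apply_eq_zero_iff (ZMod p) v).1 h)

/-- If the common kernel of the members of `R` is `D`, then a nonzero multiple of the indicator
function of `D` (restricted to any finite set) is a good matrix coefficient: multiply together
coefficients vanishing at the prescribed elements outside `D`. -/
theorem exists_goodCoefficient [Fact p.Prime] {R : RepB p G → Prop}
    (hfin : ∀ V, R V → Finite V.V) (hirr : ∀ V, R V → IsIrreducibleRep V.ρ)
    (hiso : ∀ V, R V → IsGoodRep R V)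
    (hR : ∀ U V : RepB p G, R U → R V → IsGoodRep R (U.tensor V)) {V₀ : RepB p G} (hV₀ : R V₀)
    (D : Set G) (hD : ∀ g, g ∈ D ↔ ∀ V, R V → V.ρ g = 1) (s : Finset G) :
    ∃ f : G → ZMod p, IsGoodCoefficient R f ∧ f 1 ≠ 0 ∧ (∀ g ∈ s, g ∉ D → f g = 0) ∧
      ∀ d ∈ D, f d = f 1 := by
  classical
  induction s using Finset.induction_on with
  | empty =>
    have := (hirr V₀ hV₀).1
    obtain ⟨v, hv⟩ := exists_ne (0 : V₀.V)
    obtain ⟨l, hl⟩ := exists_linear_ne_zero (p := p) hv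
    refine ⟨fun g => l (V₀.ρ g v), ⟨V₀, hfin V₀ hV₀, hiso V₀ hV₀, l, v, fun _ => rfl⟩,
      by simpa using hl, by simp, fun d hd => ?_⟩
    simp [(hD d).1 hd V₀ hV₀]
  | insert g s hgs ih =>
    obtain ⟨f, hf, hf1, hfs, hfD⟩ := ih
    by_cases hg : g ∈ D
    · refine ⟨f, hf, hf1, fun x hx hxD => ?_, hfD⟩
      rcases Finset.mem_insert.1 hx with rfl | hx
      · exact absurd hg hxD
      · exact hfs x hx hxD
    · have hg' := hg
      rw [hD] at hg'
      push Not at hg'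
      obtain ⟨V, hV, hVg⟩ := hg'
      obtain ⟨v, hv⟩ : ∃ v, V.ρ g v ≠ v := by
        by_contra h
        push Not at h
        exact hVg (LinearMap.ext h)
      obtain ⟨m, hm⟩ := exists_linear_ne_zero (p := p) (sub_ne_zero.2 hv)
      rw [map_sub] at hm
      refine ⟨_, hf.mul_add hR hV (hfin V hV) m v (-m (V.ρ g v)), ?_, fun x hx hxD => ?_,
        fun d hd => ?_⟩
      · refine mul_ne_zero hf1 ?_
        intro h
        apply hm
        rw [map_one, Module.End.one_apply] at h
        rw [← neg_eq_zero, neg_sub, sub_eq_add_neg]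
        exact h
      · rcases Finset.mem_insert.1 hx with rfl | hx
        · simp
        · simp [hfs x hx hxD]
      · simp only [hfD d hd, (hD d).1 hd V hV, map_one]

/-- The subgroup of the elements acting trivially on all members of `R`. -/
def commonKernel (R : RepB p G → Prop) : Subgroup G where
  carrier := {g | ∀ V, R V → V.ρ g = 1}
  one_mem' := fun V _ => map_one _
  mul_mem' := fun {a b} ha hb V hV => by rw [map_mul, ha V hV, hb V hV, one_mul]
  inv_mem' := fun {a} ha V hV => by
    have h : V.ρ a⁻¹ * V.ρ a = 1 := by rw [← map_mul, inv_mul_cancel, map_one]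
    rwa [ha V hV, mul_one] at h

theorem commonKernel_normal (R : RepB p G → Prop) : (commonKernel R).Normal :=
  ⟨fun n hn g V hV => by
    rw [map_mul, map_mul, hn V hV, mul_one, ← map_mul, mul_inv_cancel, map_one]⟩

/-- A form of the Burnside–Steinberg theorem: a nonempty tensor-closed class of irreducible
representations contains every irreducible representation on which the common kernel of the
class acts trivially. The indicator function of the common kernel `D` is a coefficient of a
good representation `U`; its translates span the functions on `G/D`, and the latter contain a
copy of `M`. -/
theorem mem_of_commonKernel_le [Finite G] [Fact p.Prime] {R : RepB p G → Prop}
    (hfin : ∀ V, R V → Finite V.V) (hirr : ∀ V, R V → IsIrreducibleRep V.ρ)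
    (hiso : ∀ V, R V → IsGoodRep R V)
    (hR : ∀ U V : RepB p G, R U → R V → IsGoodRep R (U.tensor V)) {V₀ : RepB p G} (hV₀ : R V₀)
    {M : RepB p G} (hM : IsIrreducibleRep M.ρ)
    (hker : ∀ g, (∀ V, R V → V.ρ g = 1) → M.ρ g = 1) : R M := by
  classical
  have := Fintype.ofFinite G
  let D : Subgroup G := commonKernel R
  have hDmem : ∀ g, g ∈ D ↔ ∀ V, R V → V.ρ g = 1 := fun g => Iff.rfl
  have hDnorm : D.Normal := commonKernel_normal R
  obtain ⟨F, ⟨U, hUfin, hUgood, l, u, hl⟩, hF1, hF0, hFD⟩ :=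
    exists_goodCoefficient hfin hirr hiso hR hV₀ (D : Set G) hDmem Finset.univ
  have hMnt := hM.1
  obtain ⟨v, hv⟩ := exists_ne (0 : M.V)
  obtain ⟨m, hm⟩ := exists_linear_ne_zero (p := p) hv
  let E : U.V →ₗ[ZMod p] (G → ZMod p) := LinearMap.pi fun x => l ∘ₗ U.ρ x
  let e : M.V →ₗ[ZMod p] (G → ZMod p) := LinearMap.pi fun x => m ∘ₗ M.ρ x
  have hE : ∀ y x, E y x = l (U.ρ x y) := fun _ _ => rfl
  have he : ∀ y x, e y x = m (M.ρ x y) := fun _ _ => rfl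
  have heinj : Function.Injective e := by
    rw [← LinearMap.ker_eq_bot]
    refine (hM.2 (LinearMap.ker e) fun g y hy => ?_).resolve_right fun h => hm ?_
    · rw [LinearMap.mem_ker] at hy ⊢
      funext x
      have := congrFun hy (x * g)
      rw [he, map_mul] at this
      exact this
    · have hv' : v ∈ LinearMap.ker e := h ▸ Submodule.mem_top
      have := congrFun (LinearMap.mem_ker.1 hv') 1
      rw [he, map_one] at this
      exact this
  have hsub : ∀ y : M.V, ∃ z : U.V, E z = e y := by
    intro y
    refine ⟨∑ q : G ⧸ D, (e y q.out * (F 1)⁻¹) • U.ρ (q.out)⁻¹ u, ?_⟩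
    funext x
    have h1 : ∀ q : G ⧸ D, E ((e y q.out * (F 1)⁻¹) • U.ρ (q.out)⁻¹ u) x =
        if q = (x : G ⧸ D) then e y x else 0 := by
      intro q
      rw [map_smul, Pi.smul_apply, hE, ← Module.End.mul_apply, ← map_mul, ← hl, smul_eq_mul]
      have hq : (q.out : G ⧸ D) = q := QuotientGroup.out_eq' q
      split_ifs with h
      · have hmem : (q.out)⁻¹ * x ∈ D := QuotientGroup.eq.1 (hq.trans h)
        rw [hFD _ (hDnorm.mem_comm hmem), mul_assoc, inv_mul_cancel₀ hF1, mul_one, he, he]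
        have h2 : M.ρ ((q.out)⁻¹ * x) = 1 := hker _ hmem
        have h3 : M.ρ x = M.ρ q.out := by
          rw [← mul_one (M.ρ q.out), ← h2, ← map_mul, mul_inv_cancel_left]
        rw [h3]
      · rw [hF0 (x * (q.out)⁻¹) (Finset.mem_univ _), mul_zero]
        intro hmem
        exact h (hq.symm.trans (QuotientGroup.eq.2 (hDnorm.mem_comm hmem)))
    rw [map_sum, Finset.sum_apply, Finset.sum_congr rfl fun q _ => h1 q]
    simp
  let T : Submodule (ZMod p) U.V := (LinearMap.range e).comap E
  let ψ : T →ₗ[ZMod p] M.V := (LinearEquiv.ofInjective e heinj).symm.toLinearMap ∘ₗ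
    E.restrict (p := T) (q := LinearMap.range e) fun x hx => hx
  have hψ : ∀ t : T, e (ψ t) = E t := fun t =>
    congrArg Subtype.val ((LinearEquiv.ofInjective e heinj).apply_symm_apply
      (E.restrict (p := T) (q := LinearMap.range e) (fun x hx => hx) t))
  have hequiv : ∀ (g : G) z y, E z = e y → E (U.ρ g z) = e (M.ρ g y) := by
    intro g z y h
    funext x
    have := congrFun h (x * g)
    rw [hE, he, map_mul, map_mul] at this
    exact this
  refine hUgood M hM ⟨T, ψ, ?_, ?_, ?_⟩
  · rintro g z ⟨y, hy⟩
    exact ⟨M.ρ g y, (hequiv g z y hy.symm).symm⟩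
  · intro y
    obtain ⟨z, hz⟩ := hsub y
    refine ⟨⟨z, ⟨y, hz.symm⟩⟩, heinj ?_⟩
    rw [hψ]
    exact hz
  · intro g t t' htt
    apply heinj
    rw [hψ, htt]
    exact hequiv g t _ (hψ t).symm

end Steinberg

/-! ### Split extensions -/

/-- The maps `j`, `π` exhibit `H` as the split extension of the module of `ρ` by the group
induced by `G`; the unbundled form of `IsSplitModuleExtension`. -/
structure IsSplitData {p : ℕ} {G V : Type} [Group G] [AddCommGroup V] [Module (ZMod p) V]
    (ρ : Representation (ZMod p) G V) {H : Type} [Group H] (j : V → H) (π : G →* H) : Prop where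
  map_add : ∀ v w : V, j (v + w) = j v * j w
  eq_one_iff : ∀ v : V, j v = 1 ↔ v = 0
  conj : ∀ (g : G) (v : V), j (ρ g v) = π g * j v * (π g)⁻¹
  ker : ∀ g : G, π g = 1 ↔ ∀ v : V, ρ g v = v
  exists_eq : ∀ h : H, ∃ (v : V) (g : G), h = j v * π g
  disjoint : ∀ (v : V) (g : G), j v * π g = 1 → j v = 1 ∧ π g = 1

theorem isSplitModuleExtension_iff {p : ℕ} {G V : Type} [Group G] [AddCommGroup V]
    [Module (ZMod p) V] (ρ : Representation (ZMod p) G V) (H : Type) [Group H] :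
    IsSplitModuleExtension ρ H ↔ ∃ (j : V → H) (π : G →* H), IsSplitData ρ j π :=
  ⟨fun ⟨j, π, h1, h2, h3, h4, h5, h6⟩ => ⟨j, π, h1, h2, h3, h4, h5, h6⟩,
    fun ⟨j, π, h1, h2, h3, h4, h5, h6⟩ => ⟨j, π, h1, h2, h3, h4, h5, h6⟩⟩

section Split

variable {p : ℕ} {G V : Type} [Group G] [AddCommGroup V] [Module (ZMod p) V]

/-- The action of `G` on the multiplicative copy of the module underlying a representation. -/
def repToMulAut (ρ : Representation (ZMod p) G V) : G →* MulAut (Multiplicative V) where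
  toFun g :=
    { toFun := fun v => Multiplicative.ofAdd (ρ g v.toAdd)
      invFun := fun v => Multiplicative.ofAdd (ρ g⁻¹ v.toAdd)
      left_inv := fun v => by simp
      right_inv := fun v => by simp
      map_mul' := fun v w => by simp }
  map_one' := by ext v; simp
  map_mul' g h := by ext v; simp

/-- The split extension exists: it is the semidirect product of the module by the group of
automorphisms induced by `G`. -/
theorem exists_isSplitModuleExtension (ρ : Representation (ZMod p) G V) :
    ∃ H : GrpB, IsSplitModuleExtension ρ H.carrier := by
  refine ⟨⟨Multiplicative V ⋊[(repToMulAut ρ).range.subtype] (repToMulAut ρ).range⟩, ?_⟩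
  rw [isSplitModuleExtension_iff]
  refine ⟨fun v => SemidirectProduct.inl (Multiplicative.ofAdd v),
    SemidirectProduct.inr.comp (repToMulAut ρ).rangeRestrict, ⟨?_, ?_, ?_, ?_, ?_, ?_⟩⟩
  · intro v w
    rw [ofAdd_add, map_mul]
  · intro v
    rw [← map_one SemidirectProduct.inl, SemidirectProduct.inl_inj]
    exact ofAdd_eq_one
  · intro g v
    have := SemidirectProduct.inl_aut (φ := (repToMulAut ρ).range.subtype)
      ((repToMulAut ρ).rangeRestrict g) (Multiplicative.ofAdd v)
    rw [map_inv] at this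
    exact this
  · intro g
    rw [MonoidHom.comp_apply, ← map_one SemidirectProduct.inr, SemidirectProduct.inr_inj]
    constructor
    · intro h v
      have := DFunLike.congr_fun (congrArg Subtype.val h) (Multiplicative.ofAdd v)
      exact congrArg Multiplicative.toAdd this
    · intro h
      apply Subtype.ext
      ext v
      exact congrArg Multiplicative.ofAdd (h v.toAdd)
  · intro h
    obtain ⟨g, hg⟩ := (repToMulAut ρ).rangeRestrict_surjective h.right
    refine ⟨h.left.toAdd, g, ?_⟩
    rw [MonoidHom.comp_apply, hg]
    exact (SemidirectProduct.inl_left_mul_inr_right h).symm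
  · intro v g h
    have h2 := congrArg SemidirectProduct.right h
    simp only [SemidirectProduct.mul_right, SemidirectProduct.right_inl, one_mul,
      MonoidHom.comp_apply, SemidirectProduct.right_inr, SemidirectProduct.one_right] at h2
    have h3 : (SemidirectProduct.inr.comp (repToMulAut ρ).rangeRestrict) g =
        (1 : Multiplicative V ⋊[(repToMulAut ρ).range.subtype] (repToMulAut ρ).range) := by
      rw [MonoidHom.comp_apply, h2, map_one]
    refine ⟨?_, h3⟩
    rw [h3, mul_one] at h
    exact h

namespace IsSplitData

variable {ρ : Representation (ZMod p) G V} {H : Type} [Group H] {j : V → H} {π : G →* H}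

theorem map_zero (h : IsSplitData ρ j π) : j 0 = 1 := (h.eq_one_iff 0).2 rfl

theorem map_neg (h : IsSplitData ρ j π) (v : V) : j (-v) = (j v)⁻¹ := by
  rw [eq_inv_iff_mul_eq_one, ← h.map_add, neg_add_cancel, h.map_zero]

theorem injective (h : IsSplitData ρ j π) : Function.Injective j := by
  intro v w hvw
  have : j (v + -w) = 1 := by rw [h.map_add, h.map_neg, hvw, mul_inv_cancel]
  rw [h.eq_one_iff] at this
  exact add_neg_eq_zero.1 this

/-- The normal subgroup of the split extension given by the module. -/
def socle (h : IsSplitData ρ j π) : Subgroup H where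
  carrier := Set.range j
  one_mem' := ⟨0, h.map_zero⟩
  mul_mem' := by
    rintro _ _ ⟨v, rfl⟩ ⟨w, rfl⟩
    exact ⟨v + w, h.map_add v w⟩
  inv_mem' := by
    rintro _ ⟨v, rfl⟩
    exact ⟨-v, h.map_neg v⟩

theorem mem_socle (h : IsSplitData ρ j π) {x : H} : x ∈ h.socle ↔ ∃ v, j v = x := Iff.rfl

theorem comm (h : IsSplitData ρ j π) (v w : V) : j v * j w = j w * j v := by
  rw [← h.map_add, ← h.map_add, add_comm]

theorem conj_eq (h : IsSplitData ρ j π) (w : V) (g : G) (v : V) :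
    (j w * π g) * j v * (j w * π g)⁻¹ = j (ρ g v) := by
  have : (j w * π g) * j v * (j w * π g)⁻¹ = j w * (π g * j v * (π g)⁻¹) * (j w)⁻¹ := by group
  rw [this, ← h.conj, h.comm, mul_inv_cancel_right]

theorem isMinimalNormalSubgroup (h : IsSplitData ρ j π) (hρ : IsIrreducibleRep ρ) :
    IsMinimalNormalSubgroup H h.socle := by
  have := hρ.1
  refine ⟨⟨?_⟩, ?_, ?_⟩
  · rintro _ ⟨v, rfl⟩ x
    obtain ⟨w, g, rfl⟩ := h.exists_eq x
    exact ⟨ρ g v, (h.conj_eq w g v).symm⟩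
  · intro hbot
    obtain ⟨v, hv⟩ := exists_ne (0 : V)
    have : j v ∈ h.socle := ⟨v, rfl⟩
    rw [hbot, Subgroup.mem_bot, h.eq_one_iff] at this
    exact hv this
  · intro N hN hle
    let S : AddSubgroup V :=
      { carrier := {v | j v ∈ N}
        zero_mem' := by
          change j 0 ∈ N
          rw [h.map_zero]
          exact N.one_mem
        add_mem' := fun {a b} ha hb => by
          change j (a + b) ∈ N
          rw [h.map_add]
          exact N.mul_mem ha hb
        neg_mem' := fun {a} ha => by
          change j (-a) ∈ N
          rw [h.map_neg]
          exact N.inv_mem ha }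
    have hS : ∀ v, v ∈ AddSubgroup.toZModSubmodule p S ↔ j v ∈ N := fun v => Iff.rfl
    rcases hρ.2 (AddSubgroup.toZModSubmodule p S) (fun g v hv => by
      rw [hS] at hv ⊢
      rw [h.conj]
      exact hN.conj_mem _ hv _) with h0 | h1
    · left
      rw [eq_bot_iff]
      intro x hx
      obtain ⟨v, rfl⟩ := hle hx
      have : v ∈ AddSubgroup.toZModSubmodule p S := hx
      rw [h0, Submodule.mem_bot] at this
      rw [this, h.map_zero]
      exact Subgroup.one_mem _
    · right
      refine le_antisymm hle ?_
      rintro _ ⟨v, rfl⟩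
      rw [← hS, h1]
      exact Submodule.mem_top

/-- The module is self-centralizing because only the group induced by `G` is attached to it. -/
theorem centralizer_socle (h : IsSplitData ρ j π) :
    Subgroup.centralizer (h.socle : Set H) = h.socle := by
  ext x
  rw [Subgroup.mem_centralizer_iff]
  constructor
  · intro hx
    obtain ⟨w, g, rfl⟩ := h.exists_eq x
    have : π g = 1 := by
      rw [h.ker]
      intro v
      apply h.injective
      rw [← h.conj_eq w, ← hx (j v) ⟨v, rfl⟩, mul_inv_cancel_right]
    exact ⟨w, by rw [this, mul_one]⟩
  · rintro ⟨v, rfl⟩ _ ⟨w, rfl⟩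
    exact h.comm w v

theorem isPrimitiveGroup (h : IsSplitData ρ j π) (hρ : IsIrreducibleRep ρ) :
    IsPrimitiveGroup H :=
  ⟨h.socle, h.isMinimalNormalSubgroup hρ, h.centralizer_socle⟩

/-- Two split extensions of the same representation are related by the map
`j v * π g ↦ j' v * π' g`, which is well defined since both intersections are trivial. -/
theorem exists_map (h : IsSplitData ρ j π) {H' : Type} [Group H'] {j' : V → H'} {π' : G →* H'}
    (h' : IsSplitData ρ j' π') :
    ∃ f : H → H', ∀ v g, f (j v * π g) = j' v * π' g := by
  choose v g hvg using h.exists_eq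
  refine ⟨fun x => j' (v x) * π' (g x), fun w x => ?_⟩
  have h1 := hvg (j w * π x)
  set v' := v (j w * π x)
  set g' := g (j w * π x)
  have h2 : j (-w + v') * π (g' * x⁻¹) = 1 := by
    rw [h.map_add, h.map_neg, map_mul, map_inv, mul_assoc, ← mul_assoc (j v'), ← h1]
    group
  obtain ⟨h3, h4⟩ := h.disjoint _ _ h2
  rw [h.eq_one_iff, neg_add_eq_zero] at h3
  have h5 : π' (g' * x⁻¹) = 1 := by rwa [h'.ker, ← h.ker]
  rw [map_mul, map_inv, mul_inv_eq_one] at h5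
  change j' v' * π' g' = _
  rw [← h3, h5]

/-- The split extension is determined up to isomorphism by the representation. -/
theorem nonempty_mulEquiv (h : IsSplitData ρ j π) {H' : Type} [Group H'] {j' : V → H'}
    {π' : G →* H'} (h' : IsSplitData ρ j' π') : Nonempty (H ≃* H') := by
  obtain ⟨f, hf⟩ := h.exists_map h'
  obtain ⟨f', hf'⟩ := h'.exists_map h
  refine ⟨⟨⟨f, f', ?_, ?_⟩, ?_⟩⟩
  · intro x
    obtain ⟨v, g, rfl⟩ := h.exists_eq x
    rw [hf, hf']
  · intro x
    obtain ⟨v, g, rfl⟩ := h'.exists_eq x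
    rw [hf', hf]
  · intro x y
    change f (x * y) = f x * f y
    obtain ⟨v, g, rfl⟩ := h.exists_eq x
    obtain ⟨w, k, rfl⟩ := h.exists_eq y
    have h1 : j v * π g * (j w * π k) = j (v + ρ g w) * π (g * k) := by
      rw [h.map_add, h.conj, map_mul]
      group
    rw [h1, hf, hf, hf, h'.map_add, h'.conj, map_mul]
    group

theorem of_linearEquiv (h : IsSplitData ρ j π) {C : Type} [AddCommGroup C] [Module (ZMod p) C]
    {σ : Representation (ZMod p) G C} (i : C ≃ₗ[ZMod p] V) (hi : ∀ g c, i (σ g c) = ρ g (i c)) :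
    IsSplitData σ (j ∘ i) π where
  map_add v w := by simp [h.map_add]
  eq_one_iff v := by simp [h.eq_one_iff]
  conj g v := by simp [hi, h.conj]
  ker g := by
    rw [h.ker]
    constructor
    · intro h1 v
      apply i.injective
      rw [hi, h1]
    · intro h1 v
      obtain ⟨c, rfl⟩ := i.surjective v
      rw [← hi, h1]
  exists_eq x := by
    obtain ⟨v, g, rfl⟩ := h.exists_eq x
    exact ⟨i.symm v, g, by simp⟩
  disjoint v g := h.disjoint (i v) g

end IsSplitData

end Split

section XRep

variable {p : ℕ} {G : Type} [Group G]

/-- The irreducible representation `V` is `X`-central: its split extension is in `X`. -/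
def IsXRep (X : GrpB → Prop) (V : RepB p G) : Prop :=
  IsIrreducibleRep V.ρ ∧ ∃ H : GrpB, X H ∧ IsSplitModuleExtension V.ρ H.carrier

theorem IsXRep.finite {X : GrpB → Prop} (hX : IsPrimitiveClass X) {V : RepB p G}
    (hV : IsXRep X V) : Finite V.V := by
  obtain ⟨-, H, hH, hs⟩ := hV
  rw [isSplitModuleExtension_iff] at hs
  obtain ⟨j, π, h⟩ := hs
  have := (hX H hH).1
  exact Finite.of_injective j h.injective

/-- The only composition factor of an irreducible `X`-central representation is itself, and
`X`-centrality is invariant under isomorphism of representations. -/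
theorem IsXRep.isGoodRep {X : GrpB → Prop} {V : RepB p G} (hV : IsXRep X V) :
    IsGoodRep (IsXRep X) V := by
  intro C hC hsub
  obtain ⟨hirr, H, hH, hs⟩ := hV
  rw [isSplitModuleExtension_iff] at hs
  obtain ⟨j, π, h⟩ := hs
  have := hC.1
  refine ⟨hC, H, hH, ?_⟩
  rw [isSplitModuleExtension_iff]
  obtain ⟨T, ψ, hT, hψ, heq⟩ := hsub
  rcases hirr.2 T hT with rfl | rfl
  · have : Subsingleton C.V := hψ.subsingleton
    exact absurd this (not_subsingleton_iff_nontrivial.2 hC.1)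
  · obtain ⟨c, hc⟩ := exists_ne (0 : C.V)
    have hinj : Function.Injective ψ := by
      rw [← LinearMap.ker_eq_bot]
      rcases hirr.2 ((LinearMap.ker ψ).map (Submodule.subtype ⊤)) (by
        rintro g _ ⟨t, ht, rfl⟩
        refine ⟨⟨V.ρ g t, trivial⟩, ?_, rfl⟩
        have := heq g t ⟨V.ρ g t, trivial⟩ rfl
        rw [SetLike.mem_coe, LinearMap.mem_ker] at ht ⊢
        rw [this, ht, map_zero]) with h0 | h1
      · exact Submodule.map_injective_of_injective (Submodule.subtype_injective ⊤)
          (h0.trans (Submodule.map_bot _).symm)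
      · exfalso
        obtain ⟨t, rfl⟩ := hψ c
        have ht : (t : V.V) ∈ (LinearMap.ker ψ).map (Submodule.subtype ⊤) := by
          rw [h1]
          exact Submodule.mem_top
        obtain ⟨t', ht', h2⟩ := ht
        rw [← Subtype.ext h2] at hc
        exact hc ht'
    let i : C.V ≃ₗ[ZMod p] V.V :=
      (LinearEquiv.ofBijective ψ ⟨hinj, hψ⟩).symm.trans Submodule.topEquiv
    refine ⟨_, π, h.of_linearEquiv i fun g c => ?_⟩
    obtain ⟨t, rfl⟩ := hψ c
    have h1 : ∀ t, i (ψ t) = t := fun t =>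
      congrArg Subtype.val ((LinearEquiv.ofBijective ψ ⟨hinj, hψ⟩).symm_apply_apply t)
    rw [h1, ← heq g t ⟨V.ρ g t, trivial⟩ rfl, h1]

end XRep

/-! ### Tensor products of X-central representations -/

namespace IsSplitData

variable {p : ℕ} {G V : Type} [Group G] [AddCommGroup V] [Module (ZMod p) V]
  {ρ : Representation (ZMod p) G V} {H : Type} [Group H] {j : V → H} {π : G →* H}

/-- Conjugation makes the module of a split extension `H` a representation of `H`, inflated
along the quotient by the socle. -/
theorem exists_chiefFactorMap (h : IsSplitData ρ j π) (hρ : IsIrreducibleRep ρ) :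
    ∃ (σ : Representation (ZMod p) H V) (φ : h.socle → V),
      IsChiefFactorMap p h.socle ⊥ σ φ ∧ (∀ g, σ (π g) = ρ g) ∧ ∀ v, σ (j v) = 1 := by
  have hmin := h.isMinimalNormalSubgroup hρ
  have hex : ∀ (x : H) (v : V), ∃ w, j w = x * j v * x⁻¹ := fun x v =>
    hmin.1.conj_mem _ ⟨v, rfl⟩ x
  choose s hs using hex
  have hadd : ∀ x v w, s x (v + w) = s x v + s x w := by
    intro x v w
    apply h.injective
    rw [h.map_add, hs, hs, hs, h.map_add]
    group
  let σ : Representation (ZMod p) H V :=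
    { toFun := fun x => AddMonoidHom.toZModLinearMap p (AddMonoidHom.mk' (s x) (hadd x))
      map_one' := by
        ext v
        apply h.injective
        change j (s 1 v) = j v
        rw [hs]
        group
      map_mul' := fun x y => by
        ext v
        apply h.injective
        change j (s (x * y) v) = j (s x (s y v))
        rw [hs, hs, hs]
        group }
  have hσ : ∀ x v, j (σ x v) = x * j v * x⁻¹ := hs
  choose φ hφ using fun a : h.socle => h.mem_socle.1 a.2
  refine ⟨σ, φ, ⟨⟨hmin.1, inferInstance, bot_lt_iff_ne_bot.2 hmin.2.1, fun N hN _ hle =>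
    hmin.2.2 N hN hle⟩, ?_, ?_, ?_, ?_⟩, ?_, ?_⟩
  · intro a b
    apply h.injective
    rw [h.map_add, hφ, hφ, hφ, Subgroup.coe_mul]
  · intro v
    exact ⟨⟨j v, v, rfl⟩, h.injective (hφ _)⟩
  · intro a
    rw [← h.eq_one_iff, hφ, Subgroup.mem_bot]
  · intro x a a' haa
    apply h.injective
    rw [hσ, hφ, hφ, haa]
  · intro g
    ext v
    apply h.injective
    rw [hσ, h.conj]
  · intro w
    ext v
    apply h.injective
    rw [hσ, h.comm, mul_inv_cancel_right]
    rfl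

/-- A split extension for a representation `σ` of `L` is one for a representation `ρ` of `G`
inducing the same group of operators through some `ι : G → L`. -/
theorem pullback {L : Type} [Group L] {σ : Representation (ZMod p) L V} {π : L →* H}
    (h : IsSplitData σ j π) (ι : G →* L) (hι : ∀ g, σ (ι g) = ρ g)
    (hL : ∀ l, ∃ g, σ l = ρ g) : IsSplitData ρ j (π.comp ι) where
  map_add := h.map_add
  eq_one_iff := h.eq_one_iff
  conj g v := by rw [← hι, h.conj]; rfl
  ker g := by rw [MonoidHom.comp_apply, h.ker, hι]
  exists_eq x := by
    obtain ⟨v, l, rfl⟩ := h.exists_eq x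
    obtain ⟨g, hg⟩ := hL l
    refine ⟨v, g, ?_⟩
    congr 1
    rw [MonoidHom.comp_apply, ← mul_inv_eq_one, ← map_inv, ← map_mul, h.ker]
    intro w
    have h1 : σ (l * (ι g)⁻¹) = 1 := by
      rw [map_mul, hg, ← hι g, ← map_mul, mul_inv_cancel, map_one]
    rw [h1]
    rfl
  disjoint v g := h.disjoint v (ι g)

end IsSplitData

/-- If every element of `L` acts on `W` like an element of `G`, then a subquotient of `W` as a
`G`-module is also a subquotient as an `L`-module. -/
theorem IsSubquotient.exists_extend {p : ℕ} {G L W C : Type} [Group G] [Group L]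
    [AddCommGroup W] [Module (ZMod p) W] [AddCommGroup C] [Module (ZMod p) C]
    {ρ : Representation (ZMod p) G W} {τ : Representation (ZMod p) L W}
    {σ : Representation (ZMod p) G C} (h : IsSubquotient σ ρ) (hL : ∀ l, ∃ g, τ l = ρ g) :
    ∃ σ' : Representation (ZMod p) L C, IsSubquotient σ' τ ∧
      ∀ l g, τ l = ρ g → σ' l = σ g := by
  obtain ⟨T, ψ, hT, hψ, heq⟩ := h
  have key : ∀ g g', ρ g = ρ g' → σ g = σ g' := by
    intro g g' hg
    ext c
    obtain ⟨t, rfl⟩ := hψ c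
    rw [← heq g t ⟨ρ g t, hT g t t.2⟩ rfl]
    exact heq g' t _ (by rw [← hg])
  choose γ hγ using hL
  let σ' : Representation (ZMod p) L C :=
    { toFun := fun l => σ (γ l)
      map_one' := by
        rw [← map_one σ]
        apply key
        rw [← hγ, map_one, map_one]
      map_mul' := fun a b => by
        rw [← map_mul]
        apply key
        rw [map_mul, ← hγ, ← hγ, ← hγ, map_mul] }
  refine ⟨σ', ⟨T, ψ, fun l x hx => ?_, hψ, fun l t t' htt => ?_⟩, fun l g hlg => ?_⟩
  · rw [hγ]
    exact hT _ x hx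
  · rw [hγ] at htt
    exact heq _ t t' htt
  · exact key _ _ ((hγ l).symm.trans hlg)

/-- Subtensor closure of `X` says that the `X`-central irreducible representations of a group
form a tensor-closed family. -/
theorem IsXRep.tensor {X : GrpB → Prop} (hsub : SubtensorClosed X) {p : ℕ} (hp : p.Prime)
    {G : Type} [Group G] (U V : RepB p G) (hU : IsXRep X U) (hV : IsXRep X V) :
    IsGoodRep (IsXRep X) (U.tensor V) := by
  intro C hC hCs
  obtain ⟨irr₁, P, hP, hs₁⟩ := hU
  obtain ⟨irr₂, Q, hQ, hs₂⟩ := hV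
  rw [isSplitModuleExtension_iff] at hs₁ hs₂
  obtain ⟨j₁, π₁, h₁⟩ := hs₁
  obtain ⟨j₂, π₂, h₂⟩ := hs₂
  obtain ⟨σ₁, φ₁, hφ₁, hσ₁, hσ₁'⟩ := h₁.exists_chiefFactorMap irr₁
  obtain ⟨σ₂, φ₂, hφ₂, hσ₂, hσ₂'⟩ := h₂.exists_chiefFactorMap irr₂
  have hm₁ := h₁.isMinimalNormalSubgroup irr₁
  have hm₂ := h₂.isMinimalNormalSubgroup irr₂
  have hn₁ := hm₁.1
  have hn₂ := hm₂.1
  have hn : (h₁.socle.prod h₂.socle).Normal := Subgroup.prod_normal _ _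
  let L : Subgroup (P.carrier × Q.carrier) := h₁.socle.prod h₂.socle ⊔ (π₁.prod π₂).range
  have hle : h₁.socle.prod h₂.socle ≤ L := le_sup_left
  have hιL : ∀ g, (π₁.prod π₂) g ∈ L := fun g => le_sup_right (a := h₁.socle.prod h₂.socle)
    (b := (π₁.prod π₂).range) ⟨g, rfl⟩
  let ι : G →* L := (π₁.prod π₂).codRestrict L hιL
  let τ : Representation (ZMod p) L (U.V ⊗[ZMod p] V.V) := (Representation.tprod
    (σ₁.comp (MonoidHom.fst P.carrier Q.carrier))
    (σ₂.comp (MonoidHom.snd P.carrier Q.carrier))).comp L.subtype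
  have hτι : ∀ g, τ (ι g) = (U.tensor V).ρ g := by
    intro g
    change TensorProduct.map (σ₁ (π₁ g)) (σ₂ (π₂ g)) = TensorProduct.map (U.ρ g) (V.ρ g)
    rw [hσ₁, hσ₂]
  have hτ : ∀ l, ∃ g, τ l = (U.tensor V).ρ g := by
    rintro ⟨l, hl⟩
    obtain ⟨y, hy, z, ⟨g, rfl⟩, rfl⟩ := Subgroup.mem_sup_of_normal_left.1 hl
    refine ⟨g, ?_⟩
    obtain ⟨⟨v, hv⟩, ⟨w, hw⟩⟩ := Subgroup.mem_prod.1 hy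
    change TensorProduct.map (σ₁ (y.1 * π₁ g)) (σ₂ (y.2 * π₂ g)) =
      TensorProduct.map (U.ρ g) (V.ρ g)
    rw [← hv, ← hw, map_mul, map_mul, hσ₁', hσ₂', one_mul, one_mul, hσ₁, hσ₂]
  obtain ⟨σ', hσ's, hσ'⟩ := hCs.exists_extend hτ
  have hσ'ι : ∀ g, σ' (ι g) = C.ρ g := fun g => hσ' _ _ (hτι g)
  have hirr' : IsIrreducibleRep σ' := ⟨hC.1, fun S hS => hC.2 S fun g v hv => by
    rw [← hσ'ι]
    exact hS _ v hv⟩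
  obtain ⟨H, hH⟩ := exists_isSplitModuleExtension σ'
  obtain ⟨j, π, h⟩ := (isSplitModuleExtension_iff σ' H.carrier).1 hH
  refine ⟨hC, H, ?_, (isSplitModuleExtension_iff _ _).2 ⟨j, π.comp ι, h.pullback ι hσ'ι
    fun l => ?_⟩⟩
  · refine hsub P Q hP hQ p hp h₁.socle h₂.socle hm₁ hm₂ ⟨U.V, σ₁⟩ φ₁ hφ₁ ⟨V.V, σ₂⟩ φ₂ hφ₂ L hle
      ?_ ?_ ⟨C.V, σ'⟩ (hσ's.isCompositionFactorOf hirr') H hH (h.isPrimitiveGroup hirr')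
    · rw [eq_top_iff]
      rintro x -
      obtain ⟨v, g, rfl⟩ := h₁.exists_eq x
      exact ⟨(j₁ v, 1) * (π₁.prod π₂) g,
        L.mul_mem (hle (Subgroup.mem_prod.2 ⟨⟨v, rfl⟩, h₂.socle.one_mem⟩)) (hιL g), rfl⟩
    · rw [eq_top_iff]
      rintro x -
      obtain ⟨v, g, rfl⟩ := h₂.exists_eq x
      exact ⟨(1, j₂ v) * (π₁.prod π₂) g,
        L.mul_mem (hle (Subgroup.mem_prod.2 ⟨h₁.socle.one_mem, ⟨v, rfl⟩⟩)) (hιL g), rfl⟩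
  · obtain ⟨g, hg⟩ := hτ l
    exact ⟨g, hσ' _ _ hg⟩

/-! ### Chief factors as modules, and their transfer along surjections -/

section ChiefFactorMap

variable {p : ℕ} {G V : Type} [Group G] [AddCommGroup V] [Module (ZMod p) V]
  {ρ : Representation (ZMod p) G V} {A B : Subgroup G} {φ : A → V}

theorem IsChiefFactorMap.map_mul (h : IsChiefFactorMap p A B ρ φ) (a b : A) :
    φ (a * b) = φ a + φ b := h.2.1 a b

theorem IsChiefFactorMap.map_one (h : IsChiefFactorMap p A B ρ φ) : φ 1 = 0 :=
  (h.2.2.2.1 1).2 B.one_mem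

theorem IsChiefFactorMap.map_inv (h : IsChiefFactorMap p A B ρ φ) (a : A) :
    φ a⁻¹ = -φ a := by
  rw [eq_neg_iff_add_eq_zero, ← h.map_mul, inv_mul_cancel, h.map_one]

theorem IsChiefFactorMap.map_pow (h : IsChiefFactorMap p A B ρ φ) (a : A) (n : ℕ) :
    φ (a ^ n) = n • φ a := by
  induction n with
  | zero => rw [pow_zero, zero_smul, h.map_one]
  | succ n ih => rw [pow_succ, h.map_mul, ih, succ_nsmul]

theorem IsChiefFactorMap.eq_iff (h : IsChiefFactorMap p A B ρ φ) (a b : A) :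
    φ a = φ b ↔ (a : G)⁻¹ * b ∈ B := by
  have := h.2.2.2.1 (a⁻¹ * b)
  rw [h.map_mul, h.map_inv, neg_add_eq_zero] at this
  exact this

theorem IsChiefFactorMap.nontrivial (h : IsChiefFactorMap p A B ρ φ) :
    ∃ a : A, φ a ≠ 0 := by
  by_contra hcon
  push Not at hcon
  exact h.1.2.2.1.not_ge fun x hx => (h.2.2.2.1 ⟨x, hx⟩).1 (hcon ⟨x, hx⟩)

theorem IsChiefFactorMap.isIrreducibleRep (h : IsChiefFactorMap p A B ρ φ) :
    IsIrreducibleRep ρ := by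
  have hA := h.1.1
  have hB := h.1.2.1
  constructor
  · obtain ⟨a, ha⟩ := h.nontrivial
    exact ⟨φ a, 0, ha⟩
  · intro S hS
    let N : Subgroup G :=
      { carrier := {x | ∃ hx : x ∈ A, φ ⟨x, hx⟩ ∈ S}
        one_mem' := ⟨A.one_mem, by
          have : (⟨1, A.one_mem⟩ : A) = 1 := rfl
          rw [this, h.map_one]
          exact S.zero_mem⟩
        mul_mem' := by
          rintro x y ⟨hx, hx'⟩ ⟨hy, hy'⟩
          refine ⟨A.mul_mem hx hy, ?_⟩
          have : (⟨x * y, A.mul_mem hx hy⟩ : A) = ⟨x, hx⟩ * ⟨y, hy⟩ := rfl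
          rw [this, h.map_mul]
          exact S.add_mem hx' hy'
        inv_mem' := by
          rintro x ⟨hx, hx'⟩
          refine ⟨A.inv_mem hx, ?_⟩
          have : (⟨x⁻¹, A.inv_mem hx⟩ : A) = ⟨x, hx⟩⁻¹ := rfl
          rw [this, h.map_inv]
          exact S.neg_mem hx' }
    have hNmem : ∀ x, x ∈ N ↔ ∃ hx : x ∈ A, φ ⟨x, hx⟩ ∈ S := fun x => Iff.rfl
    have hN : N.Normal := by
      refine ⟨?_⟩
      rintro x ⟨hx, hx'⟩ g
      refine ⟨hA.conj_mem x hx g, ?_⟩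
      rw [h.2.2.2.2 g ⟨x, hx⟩ ⟨g * x * g⁻¹, hA.conj_mem x hx g⟩ rfl]
      exact hS g _ hx'
    rcases h.1.2.2.2 N hN (fun x hx => ⟨h.1.2.2.1.le hx, by
        rw [(h.2.2.2.1 ⟨x, h.1.2.2.1.le hx⟩).2 hx]
        exact S.zero_mem⟩) (fun x hx => hx.1) with h0 | h1
    · left
      rw [eq_bot_iff]
      intro v hv
      obtain ⟨a, rfl⟩ := h.2.2.1 v
      have : (a : G) ∈ N := ⟨a.2, hv⟩
      rw [h0, ← h.2.2.2.1] at this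
      exact this
    · right
      rw [eq_top_iff]
      rintro v -
      obtain ⟨a, rfl⟩ := h.2.2.1 v
      have ha : (a : G) ∈ N := by
        rw [h1]
        exact a.2
      exact ha.2

/-- The characteristic of a chief factor `A/B` is determined when `A` is a `q`-group. -/
theorem IsChiefFactorMap.prime_eq (h : IsChiefFactorMap p A B ρ φ) (hp : p.Prime) {q : ℕ}
    (hq : q.Prime) (hA : IsPGroup q A) : p = q := by
  by_contra hne
  obtain ⟨a, ha⟩ := h.nontrivial
  obtain ⟨k, hk⟩ := hA a
  apply ha
  have h1 := h.map_pow a (q ^ k)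
  rw [hk, h.map_one] at h1
  have hunit : IsUnit ((q ^ k : ℕ) : ZMod p) :=
    (ZMod.isUnit_iff_coprime _ _).2 (((Nat.coprime_primes hq hp).2 (Ne.symm hne)).pow_left k)
  rw [← Nat.cast_smul_eq_nsmul (ZMod p)] at h1
  exact (hunit.smul_eq_zero).1 h1.symm

end ChiefFactorMap

/-- A minimal normal subgroup of a finite soluble group is a module over a prime field. -/
theorem exists_chiefFactorMap_of_minimal {G : Type} [Group G] [Finite G] [Group.IsSolvable G]
    {A : Subgroup G} (hA : IsChiefFactor G A ⊥) :
    ∃ q : ℕ, q.Prime ∧ IsPGroup q A ∧ ∃ (M : RepB q G) (φ : A → M.V),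
      IsChiefFactorMap q A ⊥ M.ρ φ := by
  obtain ⟨q, hq, hexp⟩ := hA.exists_prime_pow_mem
  have hnorm := hA.1
  have hpow : ∀ a : A, a ^ q = 1 := fun a => Subtype.ext (Subgroup.mem_bot.1 (hexp a a.2))
  refine ⟨q, hq, fun a => ⟨1, by rw [pow_one, hpow]⟩, ?_⟩
  let i1 : CommGroup A :=
    { (inferInstance : Group A) with
      mul_comm := fun a b => by
        have := Subgroup.mem_bot.1 (hA.conj_mul_inv_mem a.2 b.2)
        apply Subtype.ext
        rwa [mul_inv_eq_one, mul_inv_eq_iff_eq_mul] at this }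
  let i2 : Module (ZMod q) (Additive A) := AddCommGroup.zmodModule (n := q) fun a => hpow a.toMul
  let σ : Representation (ZMod q) G (Additive A) :=
    { toFun := fun g => AddMonoidHom.toZModLinearMap q
        (MonoidHom.toAdditive (MulAut.conjNormal (H := A) g).toMonoidHom)
      map_one' := by
        refine LinearMap.ext fun a => ?_
        change MulAut.conjNormal (H := A) 1 a.toMul = a.toMul
        rw [map_one]
        rfl
      map_mul' := fun x y => by
        refine LinearMap.ext fun a => ?_
        change MulAut.conjNormal (H := A) (x * y) a.toMul = _
        rw [map_mul]
        rfl }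
  refine ⟨⟨Additive A, σ⟩, Additive.ofMul, hA, fun a b => rfl, fun v => ⟨v.toMul, rfl⟩,
    fun a => ?_, fun g a a' haa => ?_⟩
  · rw [Subgroup.mem_bot, OneMemClass.coe_eq_one]
    exact Iff.rfl
  · change a' = MulAut.conjNormal (H := A) g a
    apply Subtype.ext
    rw [haa, MulAut.conjNormal_apply]

/-- If a quotient `P` of `G` has a complemented self-centralizing normal subgroup `K` which is
the isomorphic image of the chief factor `A/B`, then `P` is the split extension of `A/B`. -/
theorem IsChiefFactorMap.isSplitModuleExtension {p : ℕ} {G V P : Type} [Group G] [Group P]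
    [AddCommGroup V] [Module (ZMod p) V] {ρ : Representation (ZMod p) G V} {A B : Subgroup G}
    {φ : A → V} (h : IsChiefFactorMap p A B ρ φ) {π : G →* P} (hπ : Function.Surjective π)
    {K S : Subgroup P} (hK : K.Normal) (hc : Subgroup.centralizer (K : Set P) = K)
    (hsup : K ⊔ S = ⊤) (hinf : K ⊓ S = ⊥) (hAK : A.map π = K) (hAB : A ⊓ π.ker = B) :
    IsSplitModuleExtension ρ P := by
  have hA := h.1.1
  have hcomm : ∀ x ∈ K, ∀ y ∈ K, x * y = y * x := by
    intro x hx y hy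
    rw [← hc] at hy
    exact hy x hx
  -- the embedding of the module
  choose α hα using h.2.2.1
  let j : V → P := fun v => π (α v)
  have hj : ∀ a, j (φ a) = π a := by
    intro a
    have h1 := (h.eq_iff _ _).1 (hα (φ a))
    rw [← hAB] at h1
    have h2 : π ((α (φ a) : G)⁻¹ * a) = 1 := h1.2
    rw [_root_.map_mul, _root_.map_inv, inv_mul_eq_one] at h2
    exact h2
  have hjK : ∀ v, j v ∈ K := fun v => hAK ▸ ⟨α v, (α v).2, rfl⟩
  have hKj : ∀ x ∈ K, ∃ v, j v = x := by
    intro x hx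
    rw [← hAK] at hx
    obtain ⟨a, ha, rfl⟩ := hx
    exact ⟨φ ⟨a, ha⟩, hj _⟩
  have hjeq : ∀ v w, j v = j w → v = w := by
    intro v w hvw
    obtain ⟨a, rfl⟩ := h.2.2.1 v
    obtain ⟨b, rfl⟩ := h.2.2.1 w
    rw [hj, hj] at hvw
    rw [h.eq_iff, ← hAB]
    refine ⟨A.mul_mem (A.inv_mem a.2) b.2, ?_⟩
    change π _ = 1
    rw [_root_.map_mul, _root_.map_inv, hvw, inv_mul_cancel]
  have hj0 : j 0 = 1 := by
    rw [← h.map_one, hj, OneMemClass.coe_one, _root_.map_one]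
  -- the projection onto the complement
  have hdec : ∀ x : P, ∃ k ∈ K, ∃ s ∈ S, k * s = x := fun x =>
    Subgroup.mem_sup_of_normal_left.1 (hsup ▸ Subgroup.mem_top x)
  have huniq : ∀ k ∈ K, ∀ s ∈ S, ∀ k' ∈ K, ∀ s' ∈ S, k * s = k' * s' → s = s' := by
    intro k hk s hs k' hk' s' hs' heq
    have h1 : k'⁻¹ * k = s' * s⁻¹ := by
      rw [inv_mul_eq_iff_eq_mul, ← mul_assoc, ← heq, mul_inv_cancel_right]
    have h2 : s' * s⁻¹ ∈ K ⊓ S :=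
      ⟨h1 ▸ K.mul_mem (K.inv_mem hk') hk, S.mul_mem hs' (S.inv_mem hs)⟩
    rw [hinf, Subgroup.mem_bot, mul_inv_eq_one] at h2
    exact h2.symm
  choose κ hκ τ hτ hκτ using hdec
  have hτeq : ∀ k ∈ K, ∀ s ∈ S, τ (k * s) = s := fun k hk s hs =>
    huniq _ (hκ _) _ (hτ _) _ hk _ hs (hκτ _)
  let θ : P →* P :=
    { toFun := τ
      map_one' := by
        have := hτeq 1 K.one_mem 1 S.one_mem
        rwa [mul_one] at this
      map_mul' := fun x y => by
        have := hτeq (κ x * (τ x * κ y * (τ x)⁻¹)) (K.mul_mem (hκ x) (hK.conj_mem _ (hκ y) _))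
          (τ x * τ y) (S.mul_mem (hτ x) (hτ y))
        rw [← this]
        congr 1
        conv_lhs => rw [← hκτ x, ← hκτ y]
        group }
  have hθ : ∀ x, θ x = τ x := fun _ => rfl
  have hconj : ∀ g v, j (ρ g v) = τ (π g) * j v * (τ (π g))⁻¹ := by
    intro g v
    obtain ⟨a, rfl⟩ := h.2.2.1 v
    rw [← h.2.2.2.2 g a ⟨g * a * g⁻¹, hA.conj_mem a a.2 g⟩ rfl, hj, hj]
    have h1 : τ (π g) * π a * (τ (π g))⁻¹ ∈ K := hK.conj_mem _ (hj a ▸ hjK (φ a)) _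
    have h2 : π (g * a * g⁻¹) = κ (π g) * (τ (π g) * π a * (τ (π g))⁻¹) * (κ (π g))⁻¹ := by
      rw [_root_.map_mul, _root_.map_mul, _root_.map_inv]
      conv_lhs => rw [← hκτ (π g)]
      group
    rw [h2, hcomm _ (hκ _) _ h1, mul_inv_cancel_right]
  rw [isSplitModuleExtension_iff]
  refine ⟨j, θ.comp π, ⟨?_, ?_, hconj, ?_, ?_, ?_⟩⟩
  · intro v w
    obtain ⟨a, rfl⟩ := h.2.2.1 v
    obtain ⟨b, rfl⟩ := h.2.2.1 w
    rw [← h.map_mul, hj, hj, hj, Subgroup.coe_mul, _root_.map_mul]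
  · intro v
    refine ⟨fun hv => hjeq _ _ (hv.trans hj0.symm), ?_⟩
    rintro rfl
    exact hj0
  · intro g
    rw [MonoidHom.comp_apply, hθ]
    constructor
    · intro hg v
      apply hjeq
      rw [hconj, hg]
      group
    · intro hg
      have h1 : τ (π g) ∈ K ⊓ S := by
        refine Subgroup.mem_inf.2 ⟨?_, hτ _⟩
        rw [← hc, Subgroup.mem_centralizer_iff]
        intro x hx
        obtain ⟨v, rfl⟩ := hKj x hx
        have := hconj g v
        rw [hg, eq_mul_inv_iff_mul_eq] at this
        exact this
      rwa [hinf, Subgroup.mem_bot] at h1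
  · intro x
    obtain ⟨v, hv⟩ := hKj _ (hκ x)
    obtain ⟨g, hg⟩ := hπ x
    refine ⟨v, g, ?_⟩
    rw [MonoidHom.comp_apply, hg, hv]
    exact (hκτ x).symm
  · intro v g hvg
    have h1 : j v ∈ K ⊓ S := by
      refine ⟨hjK v, ?_⟩
      rw [eq_inv_of_mul_eq_one_left hvg]
      exact S.inv_mem (hτ _)
    rw [hinf, Subgroup.mem_bot] at h1
    refine ⟨h1, ?_⟩
    rwa [h1, one_mul] at hvg

section Transfer

variable {G H : Type} [Group G] [Group H] {π : G →* H} {A B A' : Subgroup G}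

/-- If the chief factor `A/B` is represented as `A'/(A' ∩ B)` with `A' ∩ ker π ≤ B`, then it maps to
a chief factor under `π`. -/
theorem IsChiefFactor.map (h : IsChiefFactor G A B) (hπ : Function.Surjective π)
    (hA' : A'.Normal) (hsup : A' ⊔ B = A) (hker : A' ⊓ π.ker ≤ B) :
    IsChiefFactor H (A'.map π) ((A' ⊓ B).map π) := by
  have hB := h.2.1
  refine ⟨hA'.map π hπ, (inferInstance : (A' ⊓ B).Normal).map π hπ,
    lt_of_le_of_ne (Subgroup.map_mono inf_le_left) fun heq => ?_, fun N hN hle hle' => ?_⟩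
  · have hle : A' ≤ B := by
      intro a ha
      have : π a ∈ (A' ⊓ B).map π := heq ▸ ⟨a, ha, rfl⟩
      obtain ⟨b, hb, hab⟩ := this
      have h1 : b⁻¹ * a ∈ A' ⊓ π.ker := ⟨A'.mul_mem (A'.inv_mem hb.1) ha, by
        change π _ = 1
        rw [map_mul, map_inv, hab, inv_mul_cancel]⟩
      have := B.mul_mem hb.2 (hker h1)
      rwa [mul_inv_cancel_left] at this
    rw [sup_eq_right.2 hle] at hsup
    exact h.2.2.1.ne hsup
  · have hNc : (N.comap π ⊓ A').Normal := by
      have := hN.comap π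
      infer_instance
    rcases h.2.2.2 ((N.comap π ⊓ A') ⊔ B) inferInstance le_sup_right
      (hsup ▸ sup_le_sup_right inf_le_right _) with h0 | h1
    · left
      refine le_antisymm (fun x hx => ?_) hle
      obtain ⟨a, ha, rfl⟩ := hle' hx
      exact ⟨a, ⟨ha, sup_eq_right.1 h0 ⟨hx, ha⟩⟩, rfl⟩
    · right
      refine le_antisymm hle' ?_
      rintro _ ⟨a, ha, rfl⟩
      have haA : a ∈ (N.comap π ⊓ A') ⊔ B := h1 ▸ hsup ▸ Subgroup.mem_sup_left ha
      obtain ⟨n, hn, b, hb, rfl⟩ := Subgroup.mem_sup_of_normal_left.1 haA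
      have hbA : b ∈ A' := by
        have := A'.mul_mem (A'.inv_mem hn.2) ha
        rwa [inv_mul_cancel_left] at this
      rw [map_mul]
      exact N.mul_mem hn.1 (hle ⟨b, ⟨hbA, hb⟩, rfl⟩)

/-- Centrality passes from a chief factor of a quotient of `G` to a corresponding chief factor
of `G`. -/
theorem IsXCentral.of_map {X : GrpB → Prop} (h : IsChiefFactor G A B)
    (hsup : A' ⊔ B = A) (hker : A' ⊓ π.ker ≤ B) (hπ : Function.Surjective π) (hA' : A'.Normal)
    (hX : IsXCentral X H (A'.map π) ((A' ⊓ B).map π)) : IsXCentral X G A B := by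
  obtain ⟨-, p, hp, M, φ₁, hφ₁, P, hP, hs⟩ := hX
  have hB := h.2.1
  have hdec : ∀ a : A, ∃ a' ∈ A', ∃ b ∈ B, a' * b = a := fun a =>
    Subgroup.mem_sup_of_normal_left.1 (hsup ▸ a.2)
  choose α hα β hβ hαβ using hdec
  let ψ : A' → M.V := fun a => φ₁ ⟨π a, a, a.2, rfl⟩
  let φ : A → M.V := fun a => ψ ⟨α a, hα a⟩
  have hψeq : ∀ a b : A', ψ a = ψ b ↔ (a : G)⁻¹ * b ∈ B := by
    intro a b
    change φ₁ _ = φ₁ _ ↔ _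
    rw [hφ₁.eq_iff]
    constructor
    · rintro ⟨c, hc, hcab⟩
      have h1 : c⁻¹ * ((a : G)⁻¹ * b) ∈ A' ⊓ π.ker :=
        ⟨A'.mul_mem (A'.inv_mem hc.1) (A'.mul_mem (A'.inv_mem a.2) b.2), by
          change π _ = 1
          rw [map_mul, map_inv, hcab, map_mul, map_inv, inv_mul_cancel]⟩
      have := B.mul_mem hc.2 (hker h1)
      rwa [mul_inv_cancel_left] at this
    · intro hab
      exact ⟨_, ⟨A'.mul_mem (A'.inv_mem a.2) b.2, hab⟩, by rw [map_mul, map_inv]⟩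
  have hφ : ∀ (a : A) (a' : A') (b : G), b ∈ B → (a' : G) * b = a → φ a = ψ a' := by
    intro a a' b hb hab
    refine (hψeq _ _).2 ?_
    have h1 : (α a)⁻¹ * (a' : G) = β a * b⁻¹ := by
      rw [inv_mul_eq_iff_eq_mul, ← mul_assoc, hαβ, ← hab, mul_inv_cancel_right]
    change (α a)⁻¹ * (a' : G) ∈ B
    rw [h1]
    exact B.mul_mem (hβ a) (B.inv_mem hb)
  have hψmul : ∀ a b : A', ψ (a * b) = ψ a + ψ b := by
    intro a b
    change φ₁ _ = φ₁ _ + φ₁ _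
    rw [← hφ₁.map_mul]
    congr 1
    apply Subtype.ext
    exact map_mul π (a : G) b
  have hψ0 : ∀ a : A', ψ a = 0 ↔ (a : G) ∈ B := by
    intro a
    have h1 : ψ 1 = 0 := by
      have := hψmul 1 1
      rwa [mul_one, left_eq_add] at this
    rw [← h1, eq_comm, hψeq, OneMemClass.coe_one, inv_one, one_mul]
  refine ⟨h, p, hp, ⟨M.V, M.ρ.comp π⟩, φ, ⟨h, ?_, ?_, ?_, ?_⟩, P, hP, ?_⟩
  · intro a b
    have h1 : φ (a * b) = ψ (⟨α a, hα a⟩ * ⟨α b, hα b⟩) := by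
      refine hφ _ _ ((α b)⁻¹ * β a * α b * β b)
        (B.mul_mem ?_ (hβ b)) ?_
      · have := hB.conj_mem _ (hβ a) (α b)⁻¹
        rwa [inv_inv] at this
      · rw [Subgroup.coe_mul, Subgroup.coe_mul, ← hαβ a, ← hαβ b]
        group
    rw [h1, hψmul]
  · intro v
    obtain ⟨⟨x, a, ha, rfl⟩, rfl⟩ := hφ₁.2.2.1 v
    exact ⟨⟨a, hsup ▸ Subgroup.mem_sup_left ha⟩, hφ _ ⟨a, ha⟩ 1 B.one_mem (mul_one _)⟩
  · intro a
    change ψ _ = 0 ↔ _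
    rw [hψ0]
    change α a ∈ B ↔ _
    rw [← hαβ a]
    exact (Subgroup.mul_mem_cancel_right B (hβ a)).symm
  · intro g a a' haa
    have h1 : φ a' = ψ ⟨g * α a * g⁻¹, hA'.conj_mem _ (hα a) g⟩ := by
      refine hφ _ _ (g * β a * g⁻¹) (hB.conj_mem _ (hβ a) g) ?_
      rw [haa, ← hαβ a]
      group
    rw [h1]
    exact hφ₁.2.2.2.2 (π g) _ _ (by simp)
  · rw [isSplitModuleExtension_iff] at hs ⊢
    obtain ⟨j, θ, hd⟩ := hs
    refine ⟨j, θ.comp π, hd.pullback π (fun g => rfl) fun l => ?_⟩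
    obtain ⟨g, rfl⟩ := hπ l
    exact ⟨g, rfl⟩

end Transfer

/-! ### The classes F and pdef X -/

theorem IsSplitModuleExtension.nonempty_mulEquiv {p : ℕ} {G V H H' : Type} [Group G]
    [AddCommGroup V] [Module (ZMod p) V] [Group H] [Group H'] {ρ : Representation (ZMod p) G V}
    (h : IsSplitModuleExtension ρ H) (h' : IsSplitModuleExtension ρ H') :
    Nonempty (H ≃* H') := by
  rw [isSplitModuleExtension_iff] at h h'
  obtain ⟨j, π, h⟩ := h
  obtain ⟨j', π', h₂⟩ := h'
  exact h.nonempty_mulEquiv h₂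

/-- A minimal normal subgroup of a quotient of `G` is a chief factor of `G`. -/
theorem isChiefFactor_comap {G P : Type} [Group G] [Group P] {π : G →* P}
    (hπ : Function.Surjective π) {K : Subgroup P} (hK : IsMinimalNormalSubgroup P K) :
    IsChiefFactor G (K.comap π) π.ker := by
  refine ⟨hK.1.comap π, inferInstance, lt_of_le_of_ne (fun x hx => ?_) fun heq => hK.2.1 ?_,
    fun N hN hle hle' => ?_⟩
  · change π x ∈ K
    have hx' : π x = 1 := hx
    rw [hx']
    exact K.one_mem
  · rw [eq_bot_iff]
    intro x hx
    obtain ⟨g, rfl⟩ := hπ x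
    have hg : g ∈ K.comap π := hx
    rw [← heq] at hg
    exact hg
  · have h1 : (N.map π).comap π = N := by
      rw [Subgroup.comap_map_eq, sup_eq_left.2 hle]
    rcases hK.2.2 (N.map π) (hN.map π hπ) (Subgroup.map_le_iff_le_comap.2 hle') with h | h
    · left
      rw [← h1, h, MonoidHom.comap_bot]
    · right
      rw [← h1, h]

section Classes

variable {X : GrpB → Prop}

/-- The primitive quotient `P` is the split extension of its socle, which is `X`-central as a chief
factor of `G`. -/
theorem FClass.pdefClass (hXiso : IsoClosed X) {G : GrpB} (hG : FClass X G) :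
    PdefClass X G := by
  obtain ⟨hfin, hsol, hcent⟩ := hG
  refine ⟨hfin, hsol, fun P π hπ hP => ?_⟩
  obtain ⟨K, hK, hc⟩ := hP
  obtain ⟨-, p, hp, M, φ, hφ, H, hH, hs⟩ := hcent _ _ (isChiefFactor_comap hπ hK)
  have hsol' : Group.IsSolvable G.carrier := hsol
  have : Group.IsSolvable P.carrier := Group.isSolvable_of_surjective hπ
  have : Finite P.carrier := Finite.of_surjective π hπ
  obtain ⟨S, hsup, hinf⟩ := primitive_complement hK hc
  have hs' := hφ.isSplitModuleExtension hπ hK.1 hc hsup hinf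
    (Subgroup.map_comap_eq_self_of_surjective hπ K)
    (inf_eq_right.2 (isChiefFactor_comap hπ hK).2.2.1.le)
  exact hXiso H P hH (hs.nonempty_mulEquiv hs')

theorem PdefClass.quotient {G : GrpB} (hG : PdefClass X G) (H : GrpB)
    (π : G.carrier →* H.carrier) (hπ : Function.Surjective π) : PdefClass X H := by
  obtain ⟨hfin, hsol, h⟩ := hG
  have hsol' : Group.IsSolvable G.carrier := hsol
  exact ⟨Finite.of_surjective π hπ, Group.isSolvable_of_surjective hπ,
    fun P θ hθ hP => h P (θ.comp π) (hθ.comp hπ) hP⟩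

/-- If `H ∈ F` is a quotient of `G`, then each chief factor `A/B` of `G` that has a representative
`A'/(A' ∩ B)` untouched by the kernel is `X`-central. -/
theorem FClass.isXCentral {G H : GrpB} (hH : FClass X H) {π : G.carrier →* H.carrier}
    (hπ : Function.Surjective π) {A B A' : Subgroup G.carrier}
    (h : IsChiefFactor G.carrier A B) (hA' : A'.Normal) (hsup : A' ⊔ B = A)
    (hker : A' ⊓ π.ker ≤ B) : IsXCentral X G.carrier A B :=
  .of_map h hsup hker hπ hA' (hH.2.2 _ _ (h.map hπ hA' hsup hker))

/-- A complemented abelian normal subgroup contained in all nontrivial normal subgroups is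
self-centralizing. -/
theorem centralizer_eq_of_complement {G : Type} [Group G] {A S : Subgroup G} (hA : A.Normal)
    (hA0 : A ≠ ⊥) (hab : ∀ x ∈ A, ∀ y ∈ A, x * y = y * x)
    (hmono : ∀ N : Subgroup G, N.Normal → N ≠ ⊥ → A ≤ N)
    (hsup : A ⊔ S = ⊤) (hinf : A ⊓ S = ⊥) : Subgroup.centralizer (A : Set G) = A := by
  have hC : (Subgroup.centralizer (A : Set G)).Normal := inferInstance
  have hn : (Subgroup.centralizer (A : Set G) ⊓ S).Normal := by
    refine ⟨fun c hc g => ?_⟩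
    obtain ⟨a, ha, s, hs, rfl⟩ := Subgroup.mem_sup_of_normal_left.1 (hsup ▸ Subgroup.mem_top g)
    have h1 : s * c * s⁻¹ ∈ Subgroup.centralizer (A : Set G) ⊓ S :=
      ⟨hC.conj_mem c hc.1 s, S.mul_mem (S.mul_mem hs hc.2) (S.inv_mem hs)⟩
    have h2 : a * (s * c * s⁻¹) = s * c * s⁻¹ * a := h1.1 a ha
    have h3 : a * s * c * (a * s)⁻¹ = a * (s * c * s⁻¹) * a⁻¹ := by group
    rw [h3, h2, mul_inv_cancel_right]
    exact h1
  have hbot : Subgroup.centralizer (A : Set G) ⊓ S = ⊥ := by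
    by_contra hne
    apply hA0
    rw [eq_bot_iff, ← hinf]
    exact le_inf le_rfl ((hmono _ hn hne).trans inf_le_right)
  refine le_antisymm (fun x hx => ?_) fun x hx y hy => hab y hy x hx
  obtain ⟨a, ha, s, hs, rfl⟩ := Subgroup.mem_sup_of_normal_left.1 (hsup ▸ Subgroup.mem_top x)
  have ha' : a ∈ Subgroup.centralizer (A : Set G) := fun y hy => hab y hy a ha
  have hs' : s ∈ Subgroup.centralizer (A : Set G) ⊓ S := by
    refine ⟨?_, hs⟩
    have := (Subgroup.centralizer (A : Set G)).mul_mem (Subgroup.inv_mem _ ha') hx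
    rwa [inv_mul_cancel_left] at this
  rw [hbot, Subgroup.mem_bot] at hs'
  rw [hs', mul_one]
  exact ha

/-- The heart of the matter: the minimal normal subgroup `A` of a monolithic group is
`X`-central as soon as all chief factors above `A` are and `A` has no proper supplement. The common
kernel of the `X`-central irreducible representations is a `q`-group, hence acts trivially on
`A`, and the Burnside–Steinberg theorem applies. -/
theorem isXCentral_of_nonsupplement (hXprim : IsPrimitiveClass X) (hXsub : SubtensorClosed X)
    {G : Type} [Group G] [Finite G] [Group.IsSolvable G] {A : Subgroup G}
    (hA : IsChiefFactor G A ⊥) (hmono : ∀ N : Subgroup G, N.Normal → N ≠ ⊥ → A ≤ N)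
    (habove : ∀ A₁ B₁ : Subgroup G, IsChiefFactor G A₁ B₁ → A ≤ B₁ → IsXCentral X G A₁ B₁)
    (hns : ∀ S : Subgroup G, A ⊔ S = ⊤ → S = ⊤) : IsXCentral X G A ⊥ := by
  obtain ⟨q, hq, hAq, M, φ, hφ⟩ := exists_chiefFactorMap_of_minimal hA
  have hqf : Fact q.Prime := ⟨hq⟩
  have hA0 : A ≠ ⊥ := hA.2.2.1.ne'
  let R : RepB q G → Prop := IsXRep X
  have hDn : (commonKernel R).Normal := commonKernel_normal R
  have hchief : ∀ A₁ B₁ : Subgroup G, IsChiefFactor G A₁ B₁ → A ≤ B₁ → IsPGroup q A₁ →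
      ∃ (M₁ : RepB q G) (φ₁ : A₁ → M₁.V), R M₁ ∧ IsChiefFactorMap q A₁ B₁ M₁.ρ φ₁ := by
    intro A₁ B₁ h₁ hle hpg
    obtain ⟨-, p, hp, M₁, φ₁, hφ₁, H, hH, hs⟩ := habove A₁ B₁ h₁ hle
    obtain rfl := hφ₁.prime_eq hp hq hpg
    exact ⟨M₁, φ₁, ⟨hφ₁.isIrreducibleRep, H, hH, hs⟩, hφ₁⟩
  have hDq : IsPGroup q (commonKernel R) := by
    refine isPGroup_of_centralizes_chiefFactors hA.1 hA0 hmono hq hAq hns hDn ?_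
    intro A₁ B₁ h₁ hle hpg d hd a ha
    obtain ⟨M₁, φ₁, hM₁, hφ₁⟩ := hchief A₁ B₁ h₁ hle hpg
    have hda : d * a * d⁻¹ ∈ A₁ := h₁.1.conj_mem a ha d
    have h2 := hφ₁.2.2.2.2 d ⟨a, ha⟩ ⟨_, hda⟩ rfl
    rw [hd M₁ hM₁, Module.End.one_apply] at h2
    refine (hφ₁.2.2.2.1 (⟨_, hda⟩ * ⟨a, ha⟩⁻¹)).1 ?_
    rw [hφ₁.map_mul, hφ₁.map_inv, h2, add_neg_cancel]
  have hDA := pgroup_centralizes_monolith hmono hDn hq hDq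
  obtain ⟨V₀, hV₀⟩ : ∃ V₀, R V₀ := by
    by_contra hcon
    push Not at hcon
    have htop : commonKernel R = ⊤ := by
      rw [eq_top_iff]
      exact fun g _ V hV => absurd hV (hcon V)
    rw [htop] at hDq
    have hAtop : A < ⊤ := by
      refine lt_top_iff_ne_top.2 fun h => hA0 ?_
      have := hns ⊥ (by rw [h, top_sup_eq])
      rw [h, ← this]
    obtain ⟨N, hN, hNchief⟩ := exists_chiefFactor_above hA.1 inferInstance hAtop
    obtain ⟨M₁, -, hM₁, -⟩ := hchief N A hNchief le_rfl (hDq.to_le hN)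
    exact hcon M₁ hM₁
  have hM : R M := by
    refine mem_of_commonKernel_le (fun V hV => hV.finite hXprim) (fun V hV => hV.1)
      (fun V hV => hV.isGoodRep) (fun U V hU hV => IsXRep.tensor hXsub hq U V hU hV) hV₀
      hφ.isIrreducibleRep fun g hg => ?_
    refine LinearMap.ext fun v => ?_
    obtain ⟨a, rfl⟩ := hφ.2.2.1 v
    rw [← hφ.2.2.2.2 g a a, Module.End.one_apply]
    rw [hDA g hg a a.2, mul_inv_cancel_right]
  obtain ⟨-, H, hH, hs⟩ := hM
  exact ⟨hA, q, hq, M, φ, hφ, H, hH, hs⟩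

/-- Induction on the order of `G`. All chief factors are covered by proper quotients of `G`, except
for a unique minimal normal subgroup, which is complemented or has no proper supplement. -/
theorem PdefClass.fClass (hXprim : IsPrimitiveClass X) (hXsub : SubtensorClosed X) :
    ∀ (n : ℕ) (G : GrpB), Nat.card G.carrier = n → PdefClass X G → FClass X G := by
  intro n
  induction n using Nat.strong_induction_on with
  | _ n ih =>
    intro G hn hG
    obtain ⟨hfin, hsol, hprim⟩ := id hG
    have hsol' : Group.IsSolvable G.carrier := hsol
    refine ⟨hfin, hsol, ?_⟩
    have hquot : ∀ N : Subgroup G.carrier, N.Normal → N ≠ ⊥ → ∀ A B : Subgroup G.carrier,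
        IsChiefFactor G.carrier A B → A ⊓ N ≤ B → IsXCentral X G.carrier A B := by
      intro N hN hN0 A B h hle
      have hsurj := QuotientGroup.mk'_surjective N
      have hlt : Nat.card (G.carrier ⧸ N) < n := by
        have h1 := Subgroup.card_eq_card_quotient_mul_card_subgroup N
        have h2 : 1 < Nat.card N := Subgroup.one_lt_card_iff_ne_bot N |>.2 hN0
        have h3 : 0 < Nat.card (G.carrier ⧸ N) := Nat.card_pos
        rw [hn] at h1
        nlinarith
      have hF : FClass X ⟨G.carrier ⧸ N⟩ := ih _ hlt ⟨G.carrier ⧸ N⟩ rfl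
        (hG.quotient ⟨G.carrier ⧸ N⟩ (QuotientGroup.mk' N) hsurj)
      exact hF.isXCentral hsurj h h.1 (sup_eq_left.2 h.2.2.1.le)
        (by rw [QuotientGroup.ker_mk']; exact hle)
    intro A B h
    by_cases hB : B = ⊥
    swap
    · exact hquot B h.2.1 hB A B h inf_le_right
    subst hB
    by_cases hmono : ∀ N : Subgroup G.carrier, N.Normal → N ≠ ⊥ → A ≤ N
    swap
    · push Not at hmono
      obtain ⟨N, hN, hN0, hle⟩ := hmono
      refine hquot N hN hN0 A ⊥ h ?_
      have hAn := h.1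
      exact ((h.2.2.2 (A ⊓ N) inferInstance bot_le inf_le_left).resolve_right
        fun heq => hle (inf_eq_left.1 heq)).le
    have hA0 : A ≠ ⊥ := h.2.2.1.ne'
    have hmin : IsMinimalNormalSubgroup G.carrier A :=
      ⟨h.1, hA0, fun N hN hle => h.2.2.2 N hN bot_le hle⟩
    have hab : ∀ x ∈ A, ∀ y ∈ A, x * y = y * x := by
      intro x hx y hy
      have := Subgroup.mem_bot.1 (h.conj_mul_inv_mem hx hy)
      rwa [mul_inv_eq_one, mul_inv_eq_iff_eq_mul] at this
    rcases complement_or_nonsupplement hmin hab with ⟨S, hsup, hinf⟩ | hns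
    · have hc := centralizer_eq_of_complement h.1 hA0 hab hmono hsup hinf
      have hX : X G := hprim G (MonoidHom.id _) Function.surjective_id ⟨A, hmin, hc⟩
      obtain ⟨q, hq, -, M, φ, hφ⟩ := exists_chiefFactorMap_of_minimal h
      exact ⟨h, q, hq, M, φ, hφ, G, hX, hφ.isSplitModuleExtension
        (π := MonoidHom.id G.carrier) Function.surjective_id h.1 hc hsup hinf
        (Subgroup.map_id A) (by
          rw [(MonoidHom.ker_eq_bot_iff _).2 Function.injective_id, inf_bot_eq])⟩
    · refine isXCentral_of_nonsupplement hXprim hXsub h hmono (fun A₁ B₁ h₁ hle => ?_) hns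
      refine hquot B₁ h₁.2.1 (fun h0 => hA0 ?_) A₁ B₁ h₁ inf_le_right
      rw [h0] at hle
      exact le_bot_iff.1 hle

/-- A chief factor `A/B` of `G/(N ∩ M)` avoids `N`, and is then a chief factor of `G/N`, or is
represented below `N`, hence avoids `M`. -/
theorem FClass.inf {G : GrpB} (hfin : Finite G.carrier) (hsol : Group.IsSolvable G.carrier)
    {N M : Subgroup G.carrier} (hNn : N.Normal) (hMn : M.Normal)
    (hN : QuotientIn (FClass X) G N) (hM : QuotientIn (FClass X) G M) :
    QuotientIn (FClass X) G (N ⊓ M) := by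
  obtain ⟨H₁, π₁, hπ₁, hk₁, hF₁⟩ := hN
  obtain ⟨H₂, π₂, hπ₂, hk₂, hF₂⟩ := hM
  have hsurj := QuotientGroup.mk'_surjective (N ⊓ M)
  refine ⟨⟨G.carrier ⧸ (N ⊓ M)⟩, QuotientGroup.mk' (N ⊓ M), hsurj, QuotientGroup.ker_mk' _,
    Finite.of_surjective _ hsurj, Group.isSolvable_of_surjective hsurj, fun A B h => ?_⟩
  let f : G.carrier ⧸ (N ⊓ M) →* H₁.carrier := QuotientGroup.lift (N ⊓ M) π₁
    (hk₁ ▸ inf_le_left)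
  let g : G.carrier ⧸ (N ⊓ M) →* H₂.carrier := QuotientGroup.lift (N ⊓ M) π₂
    (hk₂ ▸ inf_le_right)
  have hf : Function.Surjective f := fun y => by
    obtain ⟨x, rfl⟩ := hπ₁ y
    exact ⟨(x : G.carrier ⧸ (N ⊓ M)), rfl⟩
  have hg : Function.Surjective g := fun y => by
    obtain ⟨x, rfl⟩ := hπ₂ y
    exact ⟨(x : G.carrier ⧸ (N ⊓ M)), rfl⟩
  have hfg : f.ker ⊓ g.ker = ⊥ := by
    rw [eq_bot_iff]
    rintro x ⟨hx₁, hx₂⟩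
    obtain ⟨x, rfl⟩ := hsurj x
    have h₁ : x ∈ N := hk₁ ▸ (show π₁ x = 1 from hx₁)
    have h₂ : x ∈ M := hk₂ ▸ (show π₂ x = 1 from hx₂)
    exact (QuotientGroup.eq_one_iff x).2 ⟨h₁, h₂⟩
  have hAn := h.1
  have hBn := h.2.1
  by_cases hle : A ⊓ f.ker ≤ B
  · exact hF₁.isXCentral (G := ⟨G.carrier ⧸ (N ⊓ M)⟩) hf h h.1 (sup_eq_left.2 h.2.2.1.le) hle
  · have hsup : A ⊓ f.ker ⊔ B = A :=
      (h.2.2.2 (A ⊓ f.ker ⊔ B) inferInstance le_sup_right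
        (sup_le inf_le_left h.2.2.1.le)).resolve_left fun heq => hle (sup_eq_right.1 heq)
    refine hF₂.isXCentral (G := ⟨G.carrier ⧸ (N ⊓ M)⟩) hg h
      (inferInstance : (A ⊓ f.ker).Normal) hsup ?_
    rw [inf_assoc, hfg, inf_bot_eq]
    exact bot_le

/-- Normal subgroups inside the Frattini subgroup lie in the kernel of every primitive
quotient. -/
theorem le_ker_of_frattini {G P : Type} [Group G] [Group P] [Finite P] [Group.IsSolvable P]
    {A : Subgroup G} (hA : A.Normal) (hΦ : ∀ x ∈ A, ∀ M : Subgroup G, IsCoatom M → x ∈ M)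
    {π : G →* P} (hπ : Function.Surjective π) (hP : IsPrimitiveGroup P) : A ≤ π.ker := by
  obtain ⟨K, hK, hc⟩ := hP
  rw [← Subgroup.map_eq_bot_iff]
  by_contra hne
  have hKle := primitive_le_of_normal hK hc _ (hA.map π hπ) hne
  obtain ⟨S, hsup, hinf⟩ := primitive_complement hK hc
  rcases eq_top_or_exists_le_coatom S with h | ⟨T, hT, hST⟩
  · rw [h, inf_top_eq] at hinf
    exact hK.2.1 hinf
  · have hAT : A ≤ T.comap π := fun x hx =>
      hΦ x hx _ (Subgroup.isCoatom_comap_of_surjective hπ hT)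
    apply hT.1
    rw [eq_top_iff, ← hsup]
    exact sup_le (hKle.trans (Subgroup.map_le_iff_le_comap.2 hAT)) hST

end Classes

/-- Barnes, Theorem 3.9 for groups. Let `X` be a class of primitive finite
soluble groups, closed under isomorphism, which is primitive quotient closed, dual closed and
subtensor closed. Let `F` be the class of all finite soluble groups all of whose chief factors
are `X`-central. Then `F` is a saturated formation and `F = pdef X`. -/
theorem saturated_formation_of_primitiveQuotientClosed
    (X : GrpB → Prop)
    (hXprim : IsPrimitiveClass X)
    (hXiso : IsoClosed X)
    (hXpq : PrimitiveQuotientClosed X)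
    (hXdual : DualClosed X)
    (hXsub : SubtensorClosed X) :
    IsSaturatedFormation (FClass X) ∧ ∀ G : GrpB, FClass X G ↔ PdefClass X G := by
  have key : ∀ G : GrpB, FClass X G ↔ PdefClass X G := fun G =>
    ⟨fun h => h.pdefClass hXiso, fun h => h.fClass hXprim hXsub _ G rfl⟩
  refine ⟨⟨⟨fun G _ _ hG H π hπ => ?_, fun G hfin hsol N M hN hM h₁ h₂ =>
    FClass.inf hfin hsol hN hM h₁ h₂⟩, fun G hfin hsol A hA hΦ hq => ?_⟩, key⟩
  · rw [key] at hG ⊢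
    exact hG.quotient H π hπ
  · rw [key]
    refine ⟨hfin, hsol, fun P π hπ hP => ?_⟩
    obtain ⟨H, θ, hθ, hk, hH⟩ := hq
    rw [key] at hH
    have hsol' : Group.IsSolvable G.carrier := hsol
    have : Group.IsSolvable P.carrier := Group.isSolvable_of_surjective hπ
    have : Finite P.carrier := Finite.of_surjective π hπ
    have hle : θ.ker ≤ π.ker := hk ▸ le_ker_of_frattini hA hΦ hπ hP
    have hcomp : (θ.liftOfSurjective hθ ⟨π, hle⟩).comp θ = π :=
      θ.liftOfRightInverse_comp _ _ ⟨π, hle⟩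
    refine hH.2.2 P (θ.liftOfSurjective hθ ⟨π, hle⟩) ?_ hP
    rw [← hcomp, MonoidHom.coe_comp] at hπ
    exact hπ.of_comp
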